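/- arXiv:1403.5389 — 11 statements merged into one kernel-verified Lean document; each statement's English description precedes it below -/
import Mathlib

section
/- Let (L, ⪯) be a finite meet semilattice, let x ∈ L, and let C_L(x) = {y ∈ L : x covers y}. Suppose C_L(x) is nonempty and let ξ_L(x) be the meet of all elements of C_L(x). If z ∈ L does not satisfy ξ_L(x) ⪯ z ⪯ x, then μ_L(z, x) = 0. -/
open IncidenceAlgebra

/-!
Put `S(z) = ∑ μ(w, x)`, summed over those `w ∈ [z, x]` with `ξ ≤ w`. If `z < x`, then some `c`
covered by `x` lies above both `z` and `ξ`. So the join `j` of `z` and `ξ` exists and is `≠ x`,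
and `S(z)`, being the full sum over `[j, x]`, vanishes. As the sum over `[z, x]` vanishes too, so
does its part over the `w` with `ξ ≰ w`; by induction on the interval `[z, x]` that part is the
single term `μ(z, x)` when `ξ ≰ z`.
-/

theorem exists_isLUB_pair_of_le_of_le {L : Type*} [SemilatticeInf L] [LocallyFiniteOrder L]
    {a b c : L} (hac : a ≤ c) (hbc : b ≤ c) : ∃ j, IsLUB {a, b} j := by
  classical
  let U : Finset L := {w ∈ Finset.Icc a c | b ≤ w}
  have mem_U {w : L} : w ∈ U ↔ (a ≤ w ∧ w ≤ c) ∧ b ≤ w := by simp [U]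
  have hU : U.Nonempty := ⟨c, mem_U.2 ⟨⟨hac, le_rfl⟩, hbc⟩⟩
  refine ⟨U.inf' hU id, ?_, fun w hw => ?_⟩
  · rintro _ (rfl | rfl)
    · exact Finset.le_inf' hU id fun w hw => (mem_U.1 hw).1.1
    · exact Finset.le_inf' hU id fun w hw => (mem_U.1 hw).2
  · have haw : a ≤ w := hw (by simp)
    have hbw : b ≤ w := hw (by simp)
    have hwc : w ⊓ c ∈ U := mem_U.2 ⟨⟨le_inf haw hac, inf_le_right⟩, le_inf hbw hbc⟩
    exact (Finset.inf'_le id hwc).trans inf_le_left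

theorem filter_le_Icc_eq_Icc_of_isLUB {α : Type*} [Preorder α] [LocallyFiniteOrder α]
    {a b j : α} [DecidablePred (b ≤ ·)] (hj : IsLUB {a, b} j) (x : α) :
    {w ∈ Finset.Icc a x | b ≤ w} = Finset.Icc j x := by
  ext w
  simp [isLUB_le_iff hj, and_right_comm]

section Mobius

variable {𝕜 L : Type*} [Ring 𝕜] [SemilatticeInf L] [LocallyFiniteOrder L] [DecidableEq L]

theorem sum_mu_Icc_filter_le_eq_zero {a b c x : L} [DecidablePred (b ≤ ·)]
    (hac : a ≤ c) (hbc : b ≤ c) (hcx : c < x) :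
    ∑ w ∈ Finset.Icc a x with b ≤ w, mu 𝕜 w x = 0 := by
  obtain ⟨j, hj⟩ := exists_isLUB_pair_of_le_of_le hac hbc
  have hjc : j ≤ c := (isLUB_le_iff hj).2 (by simp [hac, hbc])
  rw [filter_le_Icc_eq_Icc_of_isLUB hj, sum_Icc_mu_left, if_neg (hjc.trans_lt hcx).ne]

theorem stmt_1_general {x ξ z : L} (hξx : ξ ≤ x) (hξ : ξ ∈ lowerBounds {y | y ⋖ x})
    (hz : ¬(ξ ≤ z ∧ z ≤ x)) : mu 𝕜 z x = 0 := by
  classical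
  by_cases hzx : z ≤ x
  swap
  · exact apply_eq_zero_of_not_le hzx _
  have hξz : ¬ξ ≤ z := fun h => hz ⟨h, hzx⟩
  have hlt : z < x := hzx.lt_of_ne fun h => hξz (hξx.trans_eq h.symm)
  obtain ⟨c, hzc, hcx⟩ := exists_le_covBy_of_lt hlt
  have sum_not_le : ∑ w ∈ Finset.Icc z x with ¬ξ ≤ w, mu 𝕜 w x = mu 𝕜 z x := by
    refine Finset.sum_eq_single_of_mem z (by simp [hzx, hξz]) fun w hw hwz => ?_
    obtain ⟨hw, hξw⟩ := Finset.mem_filter.1 hw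
    have : z < w := (Finset.mem_Icc.1 hw).1.lt_of_ne' hwz
    exact stmt_1_general hξx hξ fun h => hξw h.1
  calc
    mu 𝕜 z x = ∑ w ∈ Finset.Icc z x with ξ ≤ w, mu 𝕜 w x +
        ∑ w ∈ Finset.Icc z x with ¬ξ ≤ w, mu 𝕜 w x := by
      rw [sum_mu_Icc_filter_le_eq_zero hzc (hξ hcx) hcx.lt, zero_add, sum_not_le]
    _ = ∑ w ∈ Finset.Icc z x, mu 𝕜 w x := Finset.sum_filter_add_sum_filter_not ..
    _ = 0 := by rw [sum_Icc_mu_left, if_neg hlt.ne]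
termination_by (Finset.Icc z x).card
decreasing_by exact Finset.card_lt_card (Finset.Icc_ssubset_Icc_left hzx ‹z < w› le_rfl)

end Mobius

/-- Let `L` be a finite meet semilattice, `x ∈ L`, and let `C` be the set of elements
covered by `x`.  If `C` is nonempty with meet `ξ`, and `z` does not satisfy
`ξ ≤ z ≤ x`, then `μ_L (z, x) = 0`. -/
theorem stmt_1 {L : Type*} [SemilatticeInf L] [Fintype L] [DecidableEq L]
    [LocallyFiniteOrder L] (x : L) (C : Finset L) (hC : ∀ y, y ∈ C ↔ y ⋖ x)
    (hne : C.Nonempty) (z : L)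
    (hz : ¬(C.inf' hne id ≤ z ∧ z ≤ x)) :
    mu ℤ z x = 0 := by
  have hξx : C.inf' hne id ≤ x :=
    Finset.inf'_le_of_le id hne.choose_spec ((hC _).1 hne.choose_spec).le
  exact stmt_1_general hξx (fun y hy => Finset.inf'_le id ((hC y).2 hy)) hz
end

section
/- Let (L, ⪯) be a finite meet semilattice and let z, x ∈ L with z < x. If μ_L(z, x) ≠ 0, then the set C = {y ∈ L : x covers y and z ⪯ y ⪯ x} is nonempty and z equals the meet of all elements of C. -/
open IncidenceAlgebra

/-!
Inside the interval `[z, x]` any two elements have a join, and Weisner's theorem says that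
`∑ μ(z, u) = 0`, the sum running over the `u ∈ [z, x]` with `u ⊔ m = x`, as soon as `z < m`.
Let `m` be the meet of the coatoms of `[z, x]`. Every `u < x` in the interval lies below a coatom,
so `u ⊔ m` does too, and the only solution of `u ⊔ m = x` is `u = x`. Hence `z < m` would force
`μ(z, x) = 0`.
-/

section

open Finset

theorem eq_zero_of_forall_sum_Icc_eq_zero {α M : Type*} [PartialOrder α] [LocallyFiniteOrder α]
    [AddCommMonoid M] {f : α → M} {a b : α} (hab : a ≤ b)
    (hsum : ∀ c ∈ Icc a b, ∑ y ∈ Icc a c, f y = 0) : f b = 0 := by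
  have hlower : ∀ y ∈ Icc a b, y ≠ b → f y = 0 := by
    intro y hy hne
    have hyb : y < b := (mem_Icc.1 hy).2.lt_of_ne hne
    exact eq_zero_of_forall_sum_Icc_eq_zero (mem_Icc.1 hy).1 fun c hc =>
      hsum c (Icc_subset_Icc_right hyb.le hc)
  have hb : b ∈ Icc a b := right_mem_Icc.2 hab
  rw [← sum_eq_single_of_mem b hb hlower, hsum b hb]
termination_by #(Icc a b)
decreasing_by exact card_lt_card (Icc_ssubset_Icc_right hab le_rfl hyb)

theorem eq_of_isLUB_pair_of_forall_covBy_le {α : Type*} [PartialOrder α] [IsStronglyCoatomic α]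
    {z u m x : α} (hzu : z ≤ u) (hm : ∀ y, y ⋖ x → z ≤ y → m ≤ y) (hlub : IsLUB {u, m} x) :
    u = x := by
  by_contra hux
  obtain ⟨c, huc, hcx⟩ := exists_le_covBy_of_lt ((hlub.1 (by simp)).lt_of_ne hux)
  have hmc : m ≤ c := hm c hcx (hzu.trans huc)
  exact hcx.lt.not_ge (hlub.2 (by simp [huc, hmc]))

variable {α : Type*} [SemilatticeInf α] [LocallyFiniteOrder α]

theorem exists_isLUB_of_nonempty_of_bddAbove {s : Set α} (hs : s.Nonempty) (hbdd : BddAbove s) :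
    ∃ j, IsLUB s j := by
  classical
  obtain ⟨a, ha⟩ := hs
  obtain ⟨c, hc⟩ := hbdd
  let U : Finset α := {u ∈ Icc a c | u ∈ upperBounds s}
  have hcU : c ∈ U := by simp [U, hc, hc ha]
  refine ⟨U.inf' ⟨c, hcU⟩ id, fun b hb => ?_, fun u hu => ?_⟩
  · exact le_inf' _ _ fun u hu => (mem_filter.1 hu).2 hb
  · have hucU : u ⊓ c ∈ U := mem_filter.2
      ⟨mem_Icc.2 ⟨le_inf (hu ha) (hc ha), inf_le_right⟩, fun b hb => le_inf (hu hb) (hc hb)⟩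
    exact (inf'_le id hucU).trans inf_le_left

open Classical in
theorem sum_Icc_sum_filter_isLUB_pair {M : Type*} [AddCommMonoid M] (f : α → M) {z m x : α}
    (hmx : m ≤ x) :
    ∑ b ∈ Icc m x, ∑ u ∈ Icc z b with IsLUB {u, m} b, f u = ∑ u ∈ Icc z x, f u := by
  have hjoin (u : α) (hu : u ∈ Icc z x) : ∃ j, IsLUB {u, m} j :=
    exists_isLUB_of_nonempty_of_bddAbove (Set.insert_nonempty _ _)
      ⟨x, by simp [(mem_Icc.1 hu).2, hmx]⟩
  choose! join hjoin using hjoin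
  have hmaps (u : α) (hu : u ∈ Icc z x) : join u ∈ Icc m x :=
    mem_Icc.2 ⟨(hjoin u hu).1 (by simp), (hjoin u hu).2 (by simp [(mem_Icc.1 hu).2, hmx])⟩
  rw [← sum_fiberwise_of_maps_to hmaps]
  refine sum_congr rfl fun b hb => sum_congr ?_ fun _ _ => rfl
  ext u
  simp only [mem_filter]
  constructor
  · rintro ⟨hu, hub⟩
    have hux : u ∈ Icc z x := Icc_subset_Icc_right (mem_Icc.1 hb).2 hu
    exact ⟨hux, (hjoin u hux).unique hub⟩
  · rintro ⟨hu, rfl⟩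
    exact ⟨mem_Icc.2 ⟨(mem_Icc.1 hu).1, (hjoin u hu).1 (by simp)⟩, hjoin u hu⟩

variable {𝕜 : Type*} [Ring 𝕜] [DecidableEq α] {z m x : α}

open Classical in
/-- **Weisner's theorem**. -/
theorem sum_mu_filter_isLUB_pair_eq_zero (hzm : z < m) (hmx : m ≤ x) :
    ∑ u ∈ Icc z x with IsLUB {u, m} x, mu 𝕜 z u = 0 := by
  refine eq_zero_of_forall_sum_Icc_eq_zero
    (f := fun b => ∑ u ∈ Icc z b with IsLUB {u, m} b, mu 𝕜 z u) hmx fun b hb => ?_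
  have hmb : m ≤ b := (mem_Icc.1 hb).1
  rw [sum_Icc_sum_filter_isLUB_pair _ hmb, sum_Icc_mu_right, if_neg (hzm.trans_le hmb).ne]

theorem mu_eq_zero_of_forall_covBy_le (hzm : z < m) (hmx : m ≤ x)
    (hm : ∀ y, y ⋖ x → z ≤ y → m ≤ y) : mu 𝕜 z x = 0 := by
  classical
  have hzx : z ≤ x := hzm.le.trans hmx
  have hfilter : {u ∈ Icc z x | IsLUB {u, m} x} = {x} := by
    ext u
    simp only [mem_filter, mem_Icc, mem_singleton]
    constructor
    · rintro ⟨⟨hzu, -⟩, hlub⟩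
      exact eq_of_isLUB_pair_of_forall_covBy_le hzu hm hlub
    · rintro rfl
      exact ⟨⟨hzx, le_rfl⟩, by simp [hmx], fun b hb => hb (by simp)⟩
  rw [← sum_mu_filter_isLUB_pair_eq_zero (𝕜 := 𝕜) hzm hmx, hfilter, sum_singleton]

end

theorem stmt_2_general {L 𝕜 : Type*} [SemilatticeInf L] [LocallyFiniteOrder L] [DecidableEq L]
    [Ring 𝕜] {z x : L} (hzx : z < x) (hmu : mu 𝕜 z x ≠ 0)
    {C : Finset L} (hC : ∀ y, y ∈ C ↔ y ⋖ x ∧ z ≤ y ∧ y ≤ x) :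
    ∃ hne : C.Nonempty, z = C.inf' hne id := by
  obtain ⟨c, hzc, hcx⟩ := exists_le_covBy_of_lt hzx
  have hcC : c ∈ C := (hC c).2 ⟨hcx, hzc, hcx.le⟩
  refine ⟨⟨c, hcC⟩, ?_⟩
  have hz_le : z ≤ C.inf' ⟨c, hcC⟩ id := Finset.le_inf' _ _ fun y hy => ((hC y).1 hy).2.1
  have hle_x : C.inf' ⟨c, hcC⟩ id ≤ x := (Finset.inf'_le id hcC).trans hcx.le
  have hle_coatom (y : L) (hyx : y ⋖ x) (hzy : z ≤ y) : C.inf' ⟨c, hcC⟩ id ≤ y :=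
    Finset.inf'_le id ((hC y).2 ⟨hyx, hzy, hyx.le⟩)
  by_contra hne
  exact hmu (mu_eq_zero_of_forall_covBy_le (hz_le.lt_of_ne hne) hle_x hle_coatom)

/-- Let `L` be a finite meet semilattice and `z < x` in `L`.  If `μ_L (z, x) ≠ 0`, then
the set `C = {y | x covers y and z ≤ y ≤ x}` is nonempty and `z` is the meet of `C`. -/
theorem stmt_2 {L : Type*} [SemilatticeInf L] [Fintype L] [DecidableEq L]
    [LocallyFiniteOrder L] (z x : L) (hzx : z < x) (hmu : mu ℤ z x ≠ 0)
    (C : Finset L) (hC : ∀ y, y ∈ C ↔ y ⋖ x ∧ z ≤ y ∧ y ≤ x) :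
    ∃ hne : C.Nonempty, z = C.inf' hne id :=
  stmt_2_general hzx hmu hC
end

section
/- Let S = {x_1, …, x_8} be a GCD closed set of 8 distinct positive integers such that the LCM matrix [S] = [lcm(x_i, x_j)] (the 8×8 integer matrix with ij-entry lcm(x_i, x_j)) is singular, i.e. has determinant 0. Then the poset (S, |) of S under divisibility is order-isomorphic to the lattice of all subsets of a three-element set ordered by inclusion. -/
/-!
Rescaling rows and columns turns the LCM matrix into the meet matrix `(f (x ⊓ y))` of the function
`f = 1 / x` on the meet-semilattice `(S, ∣)`. It factors as `Z * diagonal g * Zᵀ`, where `Z` is the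
zeta matrix and `g` the Möbius inverse of `f`, so singularity means `g t = 0` for some `t`.

The function `f` at least halves along every strict divisibility. Adding the elements covered by `t`
one at a time and using inclusion-exclusion, this forces the sum of `g` over the elements
strictly below `t` to be either at least `2 * f t` or nonpositive, hence different from `f t`, as
long as all but one of the elements covered by `t` meet the other ones in a chain. So `g t = 0`
requires two exceptional elements, and with at most eight elements in total this only happens if `t`
covers three elements none of which lies above the meet of the other two. The meets of subsets of
these three elements are then eight distinct elements forming a Boolean lattice.
-/

open Finset Matrix

section MeetMatrix

variable {P R : Type*} [Fintype P]

open scoped Classical in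
/-- The sum of `g` over the lower set `L`. As a function of `L` it is a valuation, which is the form
in which inclusion-exclusion is used. -/
noncomputable def lowerSum [LE P] [AddCommMonoid R] (g : P → R) (L : LowerSet P) : R :=
  ∑ j with j ∈ L, g j

lemma lowerSum_bot [LE P] [AddCommMonoid R] (g : P → R) : lowerSum g ⊥ = 0 := by
  simp [lowerSum]

lemma lowerSum_sup_add_lowerSum_inf [LE P] [AddCommMonoid R] (g : P → R) (L M : LowerSet P) :
    lowerSum g (L ⊔ M) + lowerSum g (L ⊓ M) = lowerSum g L + lowerSum g M := by
  classical
  simp only [lowerSum, LowerSet.mem_sup_iff, LowerSet.mem_inf_iff, filter_or, filter_and]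
  exact sum_union_inter

lemma lowerSum_Iic_eq_add_lowerSum_Iio [PartialOrder P] [AddCommMonoid R] (g : P → R) (t : P) :
    lowerSum g (LowerSet.Iic t) = g t + lowerSum g (LowerSet.Iio t) := by
  classical
  have hinsert : univ.filter (· ≤ t) = insert t (univ.filter (· < t)) := by
    ext j
    simp [le_iff_eq_or_lt]
  simp only [lowerSum, LowerSet.mem_Iic_iff, LowerSet.mem_Iio_iff]
  rw [hinsert, sum_insert (by simp)]

/-- The Möbius inverse of `f` on a finite poset, i.e. the unique function whose sum over each
principal lower set `Iic i` is `f i`. -/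
def moebiusInverse [PartialOrder P] [LocallyFiniteOrder P] [DecidableEq P] [CommRing R]
    (f : P → R) (i : P) : R :=
  ∑ j, IncidenceAlgebra.mu R j i * f j

open scoped Classical in
/-- The matrix of the zeta function, with the larger element as the row index. -/
noncomputable def zetaMatrix (P R : Type*) [LE P] [CommRing R] : Matrix P P R :=
  of fun i j => IncidenceAlgebra.zeta R j i

/-- The meet matrix of `f`; for `f = 1 / x` on a GCD closed set it is the LCM matrix up to
rescaling rows and columns. -/
def meetMatrix [Min P] (f : P → R) : Matrix P P R :=
  of fun i j => f (i ⊓ j)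

section Moebius

variable [PartialOrder P] [LocallyFiniteOrder P] [DecidableEq P] [CommRing R]

lemma zetaMatrix_mul_mu :
    zetaMatrix P R * (of fun i j => IncidenceAlgebra.mu R j i) = 1 := by
  classical
  ext i k
  have hentry := congrArg (fun F => F k i) (IncidenceAlgebra.mu_mul_zeta R P)
  rw [IncidenceAlgebra.mul_apply, IncidenceAlgebra.one_apply] at hentry
  simp only [zetaMatrix, Matrix.mul_apply, of_apply, one_apply, eq_comm (a := i), ← hentry]
  symm
  refine sum_subset_zero_on_sdiff (subset_univ _) ?_ ?_
  · intro j hj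
    by_cases hkj : k ≤ j
    · have hji : ¬ j ≤ i := fun hji => by simp [hkj, hji] at hj
      simp [hji]
    · simp [IncidenceAlgebra.apply_eq_zero_of_not_le hkj]
  · intro j _
    exact mul_comm _ _

lemma isUnit_det_zetaMatrix : IsUnit (zetaMatrix P R).det :=
  isUnit_det_of_right_inverse zetaMatrix_mul_mu

lemma lowerSum_moebiusInverse (f : P → R) (i : P) :
    lowerSum (moebiusInverse f) (LowerSet.Iic i) = f i := by
  classical
  have hmul : moebiusInverse f = (of fun i j => IncidenceAlgebra.mu R j i) *ᵥ f := rfl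
  calc lowerSum (moebiusInverse f) (LowerSet.Iic i)
      = (zetaMatrix P R *ᵥ moebiusInverse f) i := by
        simp [lowerSum, zetaMatrix, mulVec, dotProduct, sum_filter]
    _ = f i := by rw [hmul, mulVec_mulVec, zetaMatrix_mul_mu, one_mulVec]

end Moebius

variable [SemilatticeInf P] [LocallyFiniteOrder P] [DecidableEq P] [CommRing R]

lemma meetMatrix_eq_zetaMatrix_mul (f : P → R) :
    meetMatrix f = zetaMatrix P R * diagonal (moebiusInverse f) * (zetaMatrix P R)ᵀ := by
  classical
  ext i j
  rw [meetMatrix, of_apply, ← lowerSum_moebiusInverse f (i ⊓ j), lowerSum, sum_filter,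
    Matrix.mul_apply]
  refine sum_congr rfl fun l _ => ?_
  by_cases hli : l ≤ i <;> by_cases hlj : l ≤ j <;> simp [zetaMatrix, hli, hlj]

lemma exists_moebiusInverse_eq_zero_of_det_meetMatrix_eq_zero [IsDomain R] {f : P → R}
    (hdet : (meetMatrix f).det = 0) : ∃ k, moebiusInverse f k = 0 := by
  have hzeta : (zetaMatrix P R).det ≠ 0 := isUnit_det_zetaMatrix.ne_zero
  simpa [meetMatrix_eq_zetaMatrix_mul, hzeta, prod_eq_zero_iff] using hdet

end MeetMatrix

section Covers

variable {P : Type*}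

lemma lowerClosure_setOf_covBy [PartialOrder P] [Finite P] (t : P) :
    lowerClosure {y | y ⋖ t} = LowerSet.Iio t := by
  ext j
  simp only [SetLike.mem_coe, mem_lowerClosure, LowerSet.mem_Iio_iff, Set.mem_ofPred_eq]
  constructor
  · rintro ⟨y, hy, hjy⟩
    exact hjy.trans_lt hy.lt
  · intro hjt
    obtain ⟨y, hjy, hy⟩ := exists_le_covBy_of_lt hjt
    exact ⟨y, hy, hjy⟩

lemma isAntichain_setOf_covBy [PartialOrder P] (t : P) :
    IsAntichain (· ≤ ·) {y | y ⋖ t} := fun _ hu _ hv huv hle =>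
  hu.2 (lt_of_le_of_ne hle huv) hv.lt

lemma not_inf_covBy [SemilatticeInf P] {t u v : P} (hu : u ⋖ t) (hv : v ⋖ t) (huv : u ≠ v) :
    ¬ u ⊓ v ⋖ t := by
  intro h
  have hanti := isAntichain_setOf_covBy t
  exact huv ((hanti.eq h hu inf_le_left).symm.trans (hanti.eq h hv inf_le_right))

end Covers

section ChainMeets

variable {P : Type*} [SemilatticeInf P]

/-- The meets of `y` with the other members of `C` are pairwise comparable. In inclusion-exclusion,
such a `y` contributes only a single correction term, the one for the largest of these meets. -/
def HasChainMeets (C : Set P) (y : P) : Prop :=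
  IsChain (· ≤ ·) ((y ⊓ ·) '' (C \ {y}))

lemma HasChainMeets.mono {C D : Set P} {y : P} (hDC : D ⊆ C) (h : HasChainMeets C y) :
    HasChainMeets D y :=
  IsChain.mono (Set.image_mono (Set.sdiff_subset_sdiff_left hDC)) h

lemma exists_not_le_not_le_of_not_hasChainMeets {C : Set P} {y : P} (h : ¬ HasChainMeets C y) :
    ∃ a ∈ C, ∃ b ∈ C, a ≠ y ∧ b ≠ y ∧ ¬ y ⊓ a ≤ y ⊓ b ∧ ¬ y ⊓ b ≤ y ⊓ a := by
  simp only [HasChainMeets, IsChain, Set.Pairwise, Set.mem_image, Set.mem_sdiff,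
    Set.mem_singleton_iff] at h
  push Not at h
  obtain ⟨_, ⟨a, ⟨haC, hay⟩, rfl⟩, _, ⟨b, ⟨hbC, hby⟩, rfl⟩, -, hab, hba⟩ := h
  exact ⟨a, haC, b, hbC, hay, hby, hab, hba⟩

lemma hasChainMeets_of_subset_triple {C : Set P} {y a b : P} (hC : C ⊆ {y, a, b})
    (hle : y ⊓ a ≤ y ⊓ b) : HasChainMeets C y := by
  refine IsChain.mono ?_ (IsChain.pair hle)
  rintro _ ⟨c, ⟨hcC, hcy⟩, rfl⟩
  rcases hC hcC with rfl | rfl | rfl <;> simp_all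

end ChainMeets

section MeetIndependent

variable {P : Type*} [SemilatticeInf P]

/-- No `c j` lies above the meet of the remaining `c l`. To avoid empty and infinite meets, this is
expressed by elements `n` lying below all members of the family but `c j`. -/
def MeetIndependent {κ : Type*} (c : κ → P) : Prop :=
  ∀ j, ∃ n, ∀ l, n ≤ c l ↔ l ≠ j

lemma meetIndependent_triple {u v w : P} (huv : ¬ u ⊓ v ≤ w) (huw : ¬ u ⊓ w ≤ v)
    (hvw : ¬ v ⊓ w ≤ u) : MeetIndependent ![u, v, w] := by
  intro j
  fin_cases j
  · exact ⟨v ⊓ w, fun l => by fin_cases l <;> simp [hvw]⟩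
  · exact ⟨u ⊓ w, fun l => by fin_cases l <;> simp [huw]⟩
  · exact ⟨u ⊓ v, fun l => by fin_cases l <;> simp [huv]⟩

variable {κ : Type*} [Fintype κ] {t : P} {c : κ → P} {A B : Finset κ}

open scoped Classical in
/-- The meet of `t` and of all `c j` with `j ∉ A`. Passing to the complement makes it monotone in
`A`, and `t` is its value when `A` is everything. -/
noncomputable def infCompl (t : P) (c : κ → P) (A : Finset κ) : P :=
  (insert t (Aᶜ.image c)).inf' (insert_nonempty ..) id

lemma le_infCompl_iff {n : P} : n ≤ infCompl t c A ↔ n ≤ t ∧ ∀ l ∉ A, n ≤ c l := by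
  simp [infCompl]

lemma infCompl_le_infCompl_iff [Nontrivial κ] (hct : ∀ l, c l ≤ t) (hc : MeetIndependent c) :
    infCompl t c A ≤ infCompl t c B ↔ A ⊆ B := by
  constructor
  · intro hAB j hjA
    by_contra hjB
    obtain ⟨n, hn⟩ := hc j
    obtain ⟨l, hlj⟩ := exists_ne j
    have hnA : n ≤ infCompl t c A := le_infCompl_iff.mpr
      ⟨((hn l).mpr hlj).trans (hct l), fun m hm => (hn m).mpr (ne_of_mem_of_not_mem hjA hm).symm⟩
    exact (hn j).mp ((le_infCompl_iff.mp (hnA.trans hAB)).2 j hjB) rfl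
  · intro hAB
    have hA := le_infCompl_iff.mp (le_refl (infCompl t c A))
    exact le_infCompl_iff.mpr ⟨hA.1, fun l hl => hA.2 l fun hlA => hl (hAB hlA)⟩

lemma nonempty_orderIso_finset_of_meetIndependent [Finite P] [Nontrivial κ]
    (hcard : Nat.card P ≤ 2 ^ Fintype.card κ) (hct : ∀ l, c l ≤ t) (hc : MeetIndependent c) :
    Nonempty (P ≃o Finset κ) := by
  let e : Finset κ ↪o P :=
    OrderEmbedding.ofMapLEIff (infCompl t c) fun _ _ => infCompl_le_infCompl_iff hct hc
  have hbij : Function.Bijective e :=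
    e.injective.bijective_of_nat_card_le (by simpa using hcard)
  exact ⟨(RelIso.ofSurjective e hbij.surjective).symm⟩

end MeetIndependent

section ExceptionalCovers

variable {P : Type*} [SemilatticeInf P]

lemma eq_and_eq_or_of_not_le_of_not_le {h k p q : P} (hp : p = h ∨ p = k ∨ p = h ⊓ k)
    (hq : q = h ∨ q = k ∨ q = h ⊓ k) (hpq : ¬ p ≤ q) (hqp : ¬ q ≤ p) :
    (p = h ∧ q = k) ∨ (p = k ∧ q = h) := by
  grind [inf_le_left, inf_le_right]

variable {t y a b z : P}

lemma eq_of_not_hasChainMeets_of_setOf_covBy_subset (hC : {u | u ⋖ t} ⊆ {y, a, b})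
    (hle : a ⊓ b ≤ y) {y' : P} (hy' : y' ⋖ t) (hbad : ¬ HasChainMeets {u | u ⋖ t} y') :
    y' = y := by
  by_contra hne
  refine hbad ?_
  rcases hC hy' with rfl | rfl | rfl
  · exact absurd rfl hne
  · exact hasChainMeets_of_subset_triple (a := b) (b := y) (hC.trans (by grind))
      (le_inf inf_le_left hle)
  · exact hasChainMeets_of_subset_triple (a := a) (b := y) (hC.trans (by grind))
      (le_inf inf_le_left (by rwa [inf_comm]))

variable [Fintype P]

lemma eq_inf_of_lt_of_not_covBy (hcard : Fintype.card P ≤ 8)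
    (hy : y ⋖ t) (ha : a ⋖ t) (hb : b ⋖ t) (hz : z ⋖ t) (hay : a ≠ y) (hby : b ≠ y)
    (hzC : z ∉ ({y, a, b} : Set P)) (hab : ¬ y ⊓ a ≤ y ⊓ b) (hba : ¬ y ⊓ b ≤ y ⊓ a)
    {p : P} (hpt : p < t) (hp : ¬ p ⋖ t) :
    p = y ⊓ a ∨ p = y ⊓ b ∨ p = (y ⊓ a) ⊓ (y ⊓ b) := by
  -- Otherwise `t`, four covered elements, three meets and `p` would be nine distinct elements.
  by_contra! hne
  have hht : y ⊓ a < t := inf_le_left.trans_lt hy.lt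
  have hkt : y ⊓ b < t := inf_le_left.trans_lt hy.lt
  have hgh : (y ⊓ a) ⊓ (y ⊓ b) < y ⊓ a := inf_lt_left.mpr hab
  have hgk : (y ⊓ a) ⊓ (y ⊓ b) < y ⊓ b := inf_lt_right.mpr hba
  have hh : ¬ y ⊓ a ⋖ t := not_inf_covBy hy ha hay.symm
  have hk : ¬ y ⊓ b ⋖ t := not_inf_covBy hy hb hby.symm
  have hg : ¬ (y ⊓ a) ⊓ (y ⊓ b) ⋖ t := not_covBy_of_lt_of_lt hgh hht
  have hcovers : [y, a, b, z].Nodup := by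
    have hab' : a ≠ b := fun h => hab (h ▸ le_rfl)
    simp only [Set.mem_insert_iff, Set.mem_singleton_iff] at hzC
    simp only [List.nodup_cons, List.mem_cons, List.not_mem_nil, List.nodup_nil]
    grind
  have hmeets : [y ⊓ a, y ⊓ b, (y ⊓ a) ⊓ (y ⊓ b), p].Nodup := by
    have hhk : y ⊓ a ≠ y ⊓ b := fun h => hab h.le
    simp only [List.nodup_cons, List.mem_cons, List.not_mem_nil, List.nodup_nil]
    grind
  have hnodup : (t :: ([y, a, b, z] ++ [y ⊓ a, y ⊓ b, (y ⊓ a) ⊓ (y ⊓ b), p])).Nodup := by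
    refine List.nodup_cons.mpr ⟨fun ht => ?_, hcovers.append hmeets fun q hq hq' => ?_⟩
    · simp only [List.cons_append, List.nil_append, List.mem_cons, List.not_mem_nil, or_false] at ht
      grind [CovBy.ne]
    · simp only [List.mem_cons, List.not_mem_nil, or_false] at hq hq'
      grind
  simpa using hnodup.length_le_card.trans hcard

lemma eq_of_not_hasChainMeets_of_fourth_covBy (hcard : Fintype.card P ≤ 8)
    (hy : y ⋖ t) (ha : a ⋖ t) (hb : b ⋖ t) (hz : z ⋖ t) (hay : a ≠ y) (hby : b ≠ y)
    (hzC : z ∉ ({y, a, b} : Set P)) (hab : ¬ y ⊓ a ≤ y ⊓ b) (hba : ¬ y ⊓ b ≤ y ⊓ a)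
    {y' : P} (hy' : y' ⋖ t) (hbad : ¬ HasChainMeets {u | u ⋖ t} y') : y' = y := by
  by_contra hne
  have hmeet {u v : P} (hu : u ⋖ t) (hv : v ⋖ t) (huv : u ≠ v) :
      u ⊓ v = y ⊓ a ∨ u ⊓ v = y ⊓ b ∨ u ⊓ v = (y ⊓ a) ⊓ (y ⊓ b) :=
    eq_inf_of_lt_of_not_covBy hcard hy ha hb hz hay hby hzC hab hba
      (inf_le_left.trans_lt hu.lt) (not_inf_covBy hu hv huv)
  obtain ⟨c, hc, d, hd, hcy, hdy, hcd, hdc⟩ := exists_not_le_not_le_of_not_hasChainMeets hbad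
  have hle : y ⊓ a ≤ y' ∧ y ⊓ b ≤ y' := by
    rcases eq_and_eq_or_of_not_le_of_not_le (hmeet hy' hc hcy.symm) (hmeet hy' hd hdy.symm)
      hcd hdc with ⟨hca, hdb⟩ | ⟨hcb, hda⟩
    · exact ⟨hca ▸ inf_le_left, hdb ▸ inf_le_left⟩
    · exact ⟨hda ▸ inf_le_left, hcb ▸ inf_le_left⟩
  have hale : y ⊓ a ≤ y' ⊓ y := le_inf hle.1 inf_le_left
  have hble : y ⊓ b ≤ y' ⊓ y := le_inf hle.2 inf_le_left
  rcases hmeet hy' hy hne with h | h | h <;> rw [h] at hale hble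
  · exact hba hble
  · exact hab hale
  · exact hab (hale.trans inf_le_right)

lemma exists_meetIndependent_of_nontrivial_setOf_not_hasChainMeets (hcard : Fintype.card P ≤ 8)
    (hbad : {y | y ⋖ t ∧ ¬ HasChainMeets {u | u ⋖ t} y}.Nontrivial) :
    ∃ c : Fin 3 → P, (∀ l, c l ≤ t) ∧ MeetIndependent c := by
  obtain ⟨y, ⟨hy, hybad⟩, y', ⟨hy', hybad'⟩, hne⟩ := hbad
  obtain ⟨a, ha, b, hb, hay, hby, hab, hba⟩ := exists_not_le_not_le_of_not_hasChainMeets hybad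
  by_cases hle : a ⊓ b ≤ y
  · exfalso
    refine hne.symm ?_
    by_cases hC : {u | u ⋖ t} ⊆ {y, a, b}
    · exact eq_of_not_hasChainMeets_of_setOf_covBy_subset hC hle hy' hybad'
    · obtain ⟨z, hz, hzC⟩ := Set.not_subset.mp hC
      exact eq_of_not_hasChainMeets_of_fourth_covBy hcard hy ha hb hz hay hby hzC hab hba hy'
        hybad'
  · refine ⟨![y, a, b], ?_, meetIndependent_triple ?_ ?_ hle⟩
    · intro l
      fin_cases l
      exacts [hy.le, CovBy.le ha, CovBy.le hb]
    · exact fun h => hab (le_inf inf_le_left h)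
    · exact fun h => hba (le_inf inf_le_left h)

end ExceptionalCovers

section Sign

variable {P R : Type*} [Fintype P] [SemilatticeInf P]

section Valuation

variable [AddCommGroup R]

lemma lowerSum_lowerClosure_insert (g : P → R) {A : Set P} {y m : P} (hmy : m ≤ y)
    (hmA : ∃ a ∈ A, m ≤ a) (hAm : ∀ a ∈ A, y ⊓ a ≤ m) :
    lowerSum g (lowerClosure (insert y A)) =
      lowerSum g (lowerClosure A) + lowerSum g (LowerSet.Iic y) - lowerSum g (LowerSet.Iic m) := by
  obtain ⟨a, haA, hma⟩ := hmA
  have hinf : lowerClosure A ⊓ LowerSet.Iic y = LowerSet.Iic m := by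
    ext j
    simp only [LowerSet.coe_inf, Set.mem_inter_iff, SetLike.mem_coe, mem_lowerClosure,
      LowerSet.mem_Iic_iff]
    constructor
    · rintro ⟨⟨b, hbA, hjb⟩, hjy⟩
      exact (le_inf hjy hjb).trans (hAm b hbA)
    · exact fun hjm => ⟨⟨a, haA, hjm.trans hma⟩, hjm.trans hmy⟩
  rw [Set.insert_eq, lowerClosure_union, lowerClosure_singleton, sup_comm, ← hinf,
    ← lowerSum_sup_add_lowerSum_inf, add_sub_cancel_right]

lemma HasChainMeets.exists_lowerSum_insert_eq (g : P → R) {A : Set P} {y : P} (hA : A.Nonempty)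
    (hyA : y ∉ A) (h : HasChainMeets A y) :
    ∃ a ∈ A, lowerSum g (lowerClosure (insert y A)) =
      lowerSum g (lowerClosure A) + lowerSum g (LowerSet.Iic y) -
        lowerSum g (LowerSet.Iic (y ⊓ a)) := by
  obtain ⟨a, ha⟩ := A.toFinite.exists_maximalFor (y ⊓ ·) A hA
  refine ⟨a, ha.1, lowerSum_lowerClosure_insert g inf_le_left ⟨a, ha.1, inf_le_right⟩ ?_⟩
  intro b hb
  have hmem {c : P} (hc : c ∈ A) : y ⊓ c ∈ (y ⊓ ·) '' (A \ {y}) :=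
    ⟨c, ⟨hc, ne_of_mem_of_not_mem hc hyA⟩, rfl⟩
  exact (h.total (hmem hb) (hmem ha.1)).elim id (ha.2 hb)

end Valuation

variable [CommRing R] [LinearOrder R] [IsStrictOrderedRing R] {g : P → R} {t : P}

lemma lowerSum_lowerClosure_insert_nonpos (hnonneg : ∀ i, 0 ≤ lowerSum g (LowerSet.Iic i))
    (hhalf : ∀ i j, i < j → 2 * lowerSum g (LowerSet.Iic j) ≤ lowerSum g (LowerSet.Iic i))
    {y : P} {B : Finset P} (hB : B.Nonempty) (hyB : y ∉ B)
    (hanti : IsAntichain (· ≤ ·) (insert y (B : Set P)))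
    (hchain : ∀ b ∈ B, HasChainMeets (insert y (B : Set P)) b) :
    lowerSum g (lowerClosure (insert y (B : Set P))) ≤ 0 := by
  classical
  induction hB using Finset.Nonempty.cons_induction with
  | singleton b =>
    rw [coe_singleton] at hanti ⊢
    rw [mem_singleton] at hyB
    have hmeet : lowerSum g (lowerClosure {y, b}) =
        lowerSum g (LowerSet.Iic b) + lowerSum g (LowerSet.Iic y) -
          lowerSum g (LowerSet.Iic (y ⊓ b)) := by
      rw [lowerSum_lowerClosure_insert g (A := {b}) (m := y ⊓ b) inf_le_left
        ⟨b, Set.mem_singleton b, inf_le_right⟩ (by simp), lowerClosure_singleton]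
    have hy := hhalf _ _ (inf_lt_left.mpr (hanti (by simp) (by simp) hyB))
    have hb := hhalf _ _ (inf_lt_right.mpr (hanti (by simp) (by simp) (Ne.symm hyB)))
    linarith
  | cons b B hbB _ ih =>
    rw [coe_cons, Set.insert_comm] at hanti hchain ⊢
    simp only [mem_cons, not_or] at hyB hchain
    have hsub : insert y (B : Set P) ⊆ insert b (insert y (B : Set P)) := Set.subset_insert _ _
    have hbyB : b ∉ insert y (B : Set P) := by simp [hbB, Ne.symm hyB.1]
    have ih := ih hyB.2 (hanti.subset hsub) fun c hc => (hchain c (.inr hc)).mono hsub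
    obtain ⟨a, ha, hinsert⟩ := ((hchain b (.inl rfl)).mono hsub).exists_lowerSum_insert_eq g
      (Set.insert_nonempty _ _) hbyB
    have hba : ¬ b ≤ a :=
      hanti (Set.mem_insert _ _) (hsub ha) (ne_of_mem_of_not_mem ha hbyB).symm
    have hb := hhalf _ _ (inf_lt_left.mpr hba)
    rw [hinsert]
    linarith [hnonneg b]

lemma lowerSum_lowerClosure_ne_of_hasChainMeets (hpos : ∀ i, 0 < lowerSum g (LowerSet.Iic i))
    (hhalf : ∀ i j, i < j → 2 * lowerSum g (LowerSet.Iic j) ≤ lowerSum g (LowerSet.Iic i))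
    {y : P} (hy : y ⋖ t) (hchain : ∀ b, b ⋖ t → b ≠ y → HasChainMeets {u | u ⋖ t} b) :
    lowerSum g (lowerClosure {u | u ⋖ t}) ≠ lowerSum g (LowerSet.Iic t) := by
  classical
  let B : Finset P := {b | b ⋖ t ∧ b ≠ y}
  have hinsert : insert y (B : Set P) = {u | u ⋖ t} := by
    ext u
    by_cases huy : u = y <;> simp [B, huy, hy]
  rw [← hinsert]
  rcases B.eq_empty_or_nonempty with hB | hB
  · simp only [hB, coe_empty, insert_empty_eq, lowerClosure_singleton]
    linarith [hhalf y t hy.lt, hpos t]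
  · have hle : lowerSum g (lowerClosure (insert y (B : Set P))) ≤ 0 :=
      lowerSum_lowerClosure_insert_nonpos (fun i => (hpos i).le) hhalf hB (by simp [B])
        (hinsert ▸ isAntichain_setOf_covBy t)
        fun b hb => hinsert ▸ hchain b (mem_filter.mp hb).2.1 (mem_filter.mp hb).2.2
    exact (hle.trans_lt (hpos t)).ne

lemma nontrivial_setOf_not_hasChainMeets (hpos : ∀ i, 0 < lowerSum g (LowerSet.Iic i))
    (hhalf : ∀ i j, i < j → 2 * lowerSum g (LowerSet.Iic j) ≤ lowerSum g (LowerSet.Iic i))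
    (hgt : g t = 0) : {y | y ⋖ t ∧ ¬ HasChainMeets {u | u ⋖ t} y}.Nontrivial := by
  have hcovers : lowerSum g (lowerClosure {u | u ⋖ t}) = lowerSum g (LowerSet.Iic t) := by
    rw [lowerSum_Iic_eq_add_lowerSum_Iio, hgt, zero_add, lowerClosure_setOf_covBy]
  have hexists_bad {y : P} (hy : y ⋖ t) :
      ∃ b, (b ⋖ t ∧ ¬ HasChainMeets {u | u ⋖ t} b) ∧ b ≠ y := by
    by_contra! hchain
    exact lowerSum_lowerClosure_ne_of_hasChainMeets hpos hhalf hy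
      (fun b hb hby => not_not.mp fun hbad => hby (hchain b ⟨hb, hbad⟩)) hcovers
  obtain ⟨y, hy⟩ : {u | u ⋖ t}.Nonempty := by
    by_contra! hempty
    rw [hempty, lowerClosure_empty, lowerSum_bot] at hcovers
    exact (hpos t).ne hcovers
  obtain ⟨b, hb, -⟩ := hexists_bad hy
  obtain ⟨b', hb', hne⟩ := hexists_bad hb.1
  exact ⟨b', hb', b, hb, hne⟩

theorem nonempty_orderIso_finset_three_of_det_meetMatrix_eq_zero [DecidableEq P]
    (hcard : Fintype.card P ≤ 8) {f : P → R} (hpos : ∀ i, 0 < f i)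
    (hhalf : ∀ i j, i < j → 2 * f j ≤ f i) (hdet : (meetMatrix f).det = 0) :
    Nonempty (P ≃o Finset (Fin 3)) := by
  classical
  let _ : LocallyFiniteOrder P := Fintype.toLocallyFiniteOrder
  obtain ⟨t, ht⟩ := exists_moebiusInverse_eq_zero_of_det_meetMatrix_eq_zero hdet
  have hbad := nontrivial_setOf_not_hasChainMeets (g := moebiusInverse f)
    (by simpa only [lowerSum_moebiusInverse] using hpos)
    (by simpa only [lowerSum_moebiusInverse] using hhalf) ht
  obtain ⟨c, hct, hc⟩ := exists_meetIndependent_of_nontrivial_setOf_not_hasChainMeets hcard hbad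
  exact nonempty_orderIso_finset_of_meetIndependent (by simpa using hcard) hct hc

end Sign

section LCM

variable {ι : Type*} {x : ι → ℕ}

/-- Divisibility order on the indices of a GCD closed family, with GCDs as meets. -/
noncomputable abbrev dvdSemilatticeInf (hinj : Function.Injective x)
    (hgcd : ∀ i j, ∃ k, x k = Nat.gcd (x i) (x j)) : SemilatticeInf ι where
  le i j := x i ∣ x j
  le_refl _ := dvd_rfl
  le_trans _ _ _ := dvd_trans
  le_antisymm _ _ hij hji := hinj (Nat.dvd_antisymm hij hji)
  inf i j := (hgcd i j).choose
  inf_le_left i j := (dvd_of_eq (hgcd i j).choose_spec).trans (Nat.gcd_dvd_left _ _)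
  inf_le_right i j := (dvd_of_eq (hgcd i j).choose_spec).trans (Nat.gcd_dvd_right _ _)
  le_inf i j k hij hik := (Nat.dvd_gcd hij hik).trans (dvd_of_eq (hgcd j k).choose_spec.symm)

lemma two_mul_inv_le_inv_of_dvd {K : Type*} [Field K] [LinearOrder K] [IsStrictOrderedRing K]
    {m n : ℕ} (hn : n ≠ 0) (hmn : m ∣ n) (hne : m ≠ n) : 2 * (n : K)⁻¹ ≤ (m : K)⁻¹ := by
  obtain ⟨q, rfl⟩ := hmn
  obtain ⟨hm, hq⟩ := mul_ne_zero_iff.mp hn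
  have hq2 : 2 ≤ q := by
    have hq1 : q ≠ 1 := fun hq1 => hne (by simp [hq1])
    omega
  have hq2' : (2 : K) ≤ q := by exact_mod_cast hq2
  have hm0 : (0 : K) ≤ (m : K)⁻¹ := by positivity
  calc 2 * ((m * q : ℕ) : K)⁻¹ = (m : K)⁻¹ * (2 / q) := by push_cast; field_simp
    _ ≤ (m : K)⁻¹ := mul_le_of_le_one_right hm0 (div_le_one_of_le₀ hq2' (by positivity))

lemma det_lcm_eq_prod_sq_mul_det_inv_gcd {K : Type*} [Field K] [CharZero K]
    [Fintype ι] [DecidableEq ι] (hpos : ∀ i, 0 < x i) :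
    (of fun i j => (Nat.lcm (x i) (x j) : K)).det =
      (∏ i, (x i : K)) ^ 2 * (of fun i j => (Nat.gcd (x i) (x j) : K)⁻¹).det := by
  rw [sq, mul_assoc, ← det_mul_row, ← det_mul_column]
  congr 1
  ext i j
  have hgcd : (Nat.gcd (x i) (x j) : K) ≠ 0 :=
    Nat.cast_ne_zero.mpr (Nat.gcd_pos_of_pos_left _ (hpos i)).ne'
  have hmul : (Nat.gcd (x i) (x j) : K) * Nat.lcm (x i) (x j) = x i * x j := by
    exact_mod_cast Nat.gcd_mul_lcm (x i) (x j)
  simp only [of_apply]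
  rw [← mul_assoc, ← hmul]
  field_simp

lemma det_inv_gcd_eq_zero_of_det_lcm_eq_zero {K : Type*} [Field K] [CharZero K]
    [Fintype ι] [DecidableEq ι] (hpos : ∀ i, 0 < x i)
    (hdet : (of fun i j => (Nat.lcm (x i) (x j) : ℤ)).det = 0) :
    (of fun i j => (Nat.gcd (x i) (x j) : K)⁻¹).det = 0 := by
  have hprod : ∏ i, (x i : K) ≠ 0 :=
    prod_ne_zero_iff.mpr fun i _ => Nat.cast_ne_zero.mpr (hpos i).ne'
  have hlcm : (of fun i j => (Nat.lcm (x i) (x j) : K)).det = 0 := by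
    have hcast := Int.cast_det (R := K) (of fun i j => (Nat.lcm (x i) (x j) : ℤ))
    rw [hdet, Int.cast_zero] at hcast
    simpa [Matrix.map] using hcast.symm
  rw [det_lcm_eq_prod_sq_mul_det_inv_gcd hpos] at hlcm
  exact (mul_eq_zero.mp hlcm).resolve_left (pow_ne_zero 2 hprod)

theorem stmt_3_general [Fintype ι] [DecidableEq ι] (hcard : Fintype.card ι ≤ 8)
    (hpos : ∀ i, 0 < x i) (hinj : Function.Injective x)
    (hgcd : ∀ i j, ∃ k, x k = Nat.gcd (x i) (x j))
    (hdet : (of fun i j => (Nat.lcm (x i) (x j) : ℤ)).det = 0) :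
    ∃ e : ι ≃ Finset (Fin 3), ∀ i j, x i ∣ x j ↔ e i ⊆ e j := by
  let _ := dvdSemilatticeInf hinj hgcd
  have hmeet : meetMatrix (fun i => (x i : ℚ)⁻¹) =
      of fun i j => (Nat.gcd (x i) (x j) : ℚ)⁻¹ := by
    ext i j
    exact congrArg (fun n : ℕ => (n : ℚ)⁻¹) (hgcd i j).choose_spec
  obtain ⟨e⟩ := nonempty_orderIso_finset_three_of_det_meetMatrix_eq_zero hcard
    (f := fun i => (x i : ℚ)⁻¹) (fun i => by simpa using hpos i)
    (fun i j hij => two_mul_inv_le_inv_of_dvd (hpos j).ne' hij.le (hinj.ne hij.ne))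
    (hmeet ▸ det_inv_gcd_eq_zero_of_det_lcm_eq_zero hpos hdet)
  exact ⟨e.toEquiv, fun i j => (e.le_iff_le (x := i) (y := j)).symm⟩

end LCM

/-- If `S = {x 0, …, x 7}` is a GCD closed set of 8 distinct positive integers whose
LCM matrix `[lcm (x i) (x j)]` is singular, then the poset `(S, ∣)` is order-isomorphic
to the lattice of subsets of a three-element set ordered by inclusion. -/
theorem stmt_3 (x : Fin 8 → ℕ) (hpos : ∀ i, 0 < x i) (hinj : Function.Injective x)
    (hgcd : ∀ i j, ∃ k, x k = Nat.gcd (x i) (x j))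
    (hdet : (Matrix.of fun i j => (Nat.lcm (x i) (x j) : ℤ)).det = 0) :
    ∃ e : Fin 8 ≃ Finset (Fin 3), ∀ i j, x i ∣ x j ↔ e i ⊆ e j :=
  stmt_3_general (by simp) hpos hinj hgcd hdet
end

section
/- The set S = {1, 3, 5, 7, 195, 291, 1407, 4025, 1020180525} is a GCD closed set of odd positive integers, and the 9×9 LCM matrix [S] with ij-entry lcm(x_i, x_j) is singular, i.e. its determinant is 0. (In particular, Hong's conjecture that the LCM matrix on any odd GCD closed set is nonsingular is false.) -/
/-- The counterexample set of Theorem 4.2: `{1, 3, 5, 7, 195, 291, 1407, 4025, 1020180525}`. -/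
def hongCounterexample : Fin 9 → ℕ := ![1, 3, 5, 7, 195, 291, 1407, 4025, 1020180525]

/-!
For a GCD closed family `x`, Möbius inversion along divisibility writes `1 / x i` as the sum of
`α k` over the `k` with `x k ∣ x i`. As `x k` divides `gcd (x i) (x j)` exactly when it divides
both, the matrix `[1 / gcd (x i) (x j)]` equals `E * diagonal α * Eᵀ` with `E` the 0-1
divisibility matrix. Multiplying its rows and columns by the `x i` gives the LCM matrix, so the
LCM matrix is singular as soon as some `α k` vanishes. The counterexample is chosen such that
`α` vanishes at the largest element.
-/

section GcdClosed

variable {ι R K : Type*}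

/-- A family of natural numbers is GCD closed if its range contains the gcd of any two members. -/
def IsGcdClosed (x : ι → ℕ) : Prop :=
  ∀ i j, ∃ k, x k = Nat.gcd (x i) (x j)

/-- The matrix `[f (gcd (x i) (x j))]`, which is Smith's GCD matrix for `f = Nat.cast`. -/
def gcdMatrix (f : ℕ → R) (x : ι → ℕ) : Matrix ι ι R :=
  Matrix.of fun i j => f (Nat.gcd (x i) (x j))

/-- The LCM matrix `[lcm (x i) (x j)]` of a family, with entries in `R`. -/
def lcmMatrix (R : Type*) [NatCast R] (x : ι → ℕ) : Matrix ι ι R :=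
  Matrix.of fun i j => (Nat.lcm (x i) (x j) : R)

/-- The 0-1 matrix of divisibility in a family: the `(i, j)` entry is `1` iff `x j ∣ x i`. -/
def divisibilityMatrix (R : Type*) [Zero R] [One R] (x : ι → ℕ) : Matrix ι ι R :=
  Matrix.of fun i j => if x j ∣ x i then 1 else 0

/-- `α` is the Möbius inverse of `f` along divisibility in the family `x`: summing `α` over the
members that divide `x i` recovers `f (x i)`. -/
def IsDivisorMobiusInverse [Fintype ι] [AddCommMonoid R] (x : ι → ℕ) (f : ℕ → R) (α : ι → R) :
    Prop :=
  ∀ i, ∑ k with x k ∣ x i, α k = f (x i)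

variable [Fintype ι] [DecidableEq ι]

theorem gcdMatrix_eq_divisibilityMatrix_mul [CommSemiring R] {x : ι → ℕ} {f : ℕ → R} {α : ι → R}
    (hx : IsGcdClosed x) (hα : IsDivisorMobiusInverse x f α) :
    gcdMatrix f x =
      divisibilityMatrix R x * Matrix.diagonal α * (divisibilityMatrix R x).transpose := by
  ext i j
  obtain ⟨k, hk⟩ := hx i j
  have dvd_iff (l : ι) : x l ∣ x k ↔ x l ∣ x i ∧ x l ∣ x j := by rw [hk, Nat.dvd_gcd_iff]
  calc gcdMatrix f x i j = ∑ l with x l ∣ x i ∧ x l ∣ x j, α l := by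
        simp only [gcdMatrix, Matrix.of_apply, ← hk, ← hα k, dvd_iff]
    _ = _ := by
        rw [Matrix.mul_apply, Finset.sum_filter]
        refine Finset.sum_congr rfl fun l _ => ?_
        by_cases hi : x l ∣ x i <;> by_cases hj : x l ∣ x j <;>
          simp [divisibilityMatrix, Matrix.mul_diagonal, hi, hj]

theorem det_gcdMatrix [CommRing R] {x : ι → ℕ} {f : ℕ → R} {α : ι → R}
    (hx : IsGcdClosed x) (hα : IsDivisorMobiusInverse x f α) :
    (gcdMatrix f x).det = (divisibilityMatrix R x).det ^ 2 * ∏ i, α i := by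
  rw [gcdMatrix_eq_divisibilityMatrix_mul hx hα, Matrix.det_mul, Matrix.det_mul,
    Matrix.det_transpose, Matrix.det_diagonal]
  ring

theorem lcmMatrix_eq_diagonal_mul_gcdMatrix_mul [Field K] [CharZero K] (x : ι → ℕ) :
    lcmMatrix K x = Matrix.diagonal (fun i => (x i : K)) *
      gcdMatrix (fun n => (n : K)⁻¹) x * Matrix.diagonal (fun i => (x i : K)) := by
  ext i j
  rw [Matrix.mul_diagonal, Matrix.diagonal_mul]
  simp only [lcmMatrix, gcdMatrix, Matrix.of_apply]
  rcases Nat.eq_zero_or_pos (x i) with hxi | hxi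
  · simp [hxi]
  have gcd_ne_zero : (Nat.gcd (x i) (x j) : K) ≠ 0 :=
    Nat.cast_ne_zero.mpr (Nat.gcd_pos_of_pos_left _ hxi).ne'
  have gcd_mul_lcm : (Nat.gcd (x i) (x j) : K) * Nat.lcm (x i) (x j) = x i * x j :=
    mod_cast Nat.gcd_mul_lcm (x i) (x j)
  field_simp
  linear_combination gcd_mul_lcm

theorem det_lcmMatrix [Field K] [CharZero K] {x : ι → ℕ} {α : ι → K}
    (hx : IsGcdClosed x) (hα : IsDivisorMobiusInverse x (fun n => (n : K)⁻¹) α) :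
    (lcmMatrix K x).det = (divisibilityMatrix K x).det ^ 2 * ∏ i, (x i : K) ^ 2 * α i := by
  rw [lcmMatrix_eq_diagonal_mul_gcdMatrix_mul, Matrix.det_mul, Matrix.det_mul,
    Matrix.det_diagonal, det_gcdMatrix hx hα, Finset.prod_mul_distrib, Finset.prod_pow]
  ring

theorem det_lcmMatrix_int_eq_zero {x : ι → ℕ} {α : ι → ℚ} (hx : IsGcdClosed x)
    (hα : IsDivisorMobiusInverse x (fun n => (n : ℚ)⁻¹) α) (m : ι) (hm : α m = 0) :
    (lcmMatrix ℤ x).det = 0 := by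
  have map_cast : (lcmMatrix ℤ x).map (Int.cast : ℤ → ℚ) = lcmMatrix ℚ x := by
    ext i j
    simp [lcmMatrix]
  have prod_eq_zero : ∏ i, (x i : ℚ) ^ 2 * α i = 0 :=
    Finset.prod_eq_zero (Finset.mem_univ m) (by rw [hm, mul_zero])
  apply Int.cast_injective (α := ℚ)
  rw [Int.cast_det, map_cast, det_lcmMatrix hx hα, prod_eq_zero, mul_zero, Int.cast_zero]

end GcdClosed

theorem isGcdClosed_hongCounterexample : IsGcdClosed hongCounterexample := by
  unfold IsGcdClosed
  decide

/-- The Möbius inverse of `n ↦ 1 / n` on the counterexample, computed by solving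
`∑ k with x k ∣ x i, α k = 1 / x i` for `α i` in increasing order of `x i`. -/
def hongMobiusInverse : Fin 9 → ℚ :=
  ![1, -2 / 3, -4 / 5, -6 / 7, 92 / 195, -32 / 97, 246 / 469, 378 / 575, 0]

theorem isDivisorMobiusInverse_hongMobiusInverse :
    IsDivisorMobiusInverse hongCounterexample (fun n => (n : ℚ)⁻¹) hongMobiusInverse := by
  intro i
  rw [Finset.sum_filter]
  fin_cases i <;> norm_num [Fin.sum_univ_succ, hongCounterexample, hongMobiusInverse]

/-- The set `S = {1, 3, 5, 7, 195, 291, 1407, 4025, 1020180525}` is a GCD closed set of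
odd positive integers and its LCM matrix `[lcm (x i) (x j)]` is singular.  In particular
Hong's conjecture that the LCM matrix on any odd GCD closed set is nonsingular is false. -/
theorem stmt_4 :
    (∀ i, Odd (hongCounterexample i)) ∧
    (∀ i, 0 < hongCounterexample i) ∧
    Function.Injective hongCounterexample ∧
    (∀ i j, ∃ k, hongCounterexample k = Nat.gcd (hongCounterexample i) (hongCounterexample j)) ∧
    (Matrix.of fun i j => (Nat.lcm (hongCounterexample i) (hongCounterexample j) : ℤ)).det = 0 := by
  have odd : ∀ i, Odd (hongCounterexample i) := by decide
  have injective : Function.Injective hongCounterexample := by decide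
  have singular : (lcmMatrix ℤ hongCounterexample).det = 0 :=
    det_lcmMatrix_int_eq_zero isGcdClosed_hongCounterexample
      isDivisorMobiusInverse_hongMobiusInverse 8 rfl
  exact ⟨odd, fun i => (odd i).pos, injective, isGcdClosed_hongCounterexample, singular⟩
end

section
/- If S is a GCD closed set of odd positive integers with at most 8 elements, then the LCM matrix [S] with ij-entry lcm(x_i, x_j) is nonsingular (its determinant is nonzero). -/
/-!
Let `α` solve `∑_{x_k ∣ x_i} α_k = 1 / x_i`, and let `E` be the divisibility matrix of `S`, which is
unitriangular when `S` is listed increasingly. Since `lcm a b = a b / gcd a b`, GCD closedness gives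
`[S] = D E diag(α) Eᵀ D` with `D = diag(x)`, so `det [S] = ∏ x_k² α_k` and it suffices to show that
no `α_k` vanishes.

Inclusion–exclusion over the maximal proper divisors of `x_k` in `S` gives
`x_k α_k = ∑_{B ⊆ A} (-1)^|B| lcm B`, where `A` is the antichain of the corresponding cofactors
`x_k / x_j`. Collect equal LCMs of two or more elements of `A` into joins. As `1`, the elements of
`A` and the joins are cofactors of distinct divisors of `x_k`, there are at most eight of them in
all. Oddness enters through `1/3 + 1/5 + 1/7 + 1/9 + 1/11 + 1/13 < 1`: at most six proper divisors
of an odd `r` sum to less than `r`. With at most three joins this makes the positive contribution of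
the joins exceed `∑ A`, so the alternating sum is positive. The only other possibility is three
atoms with four joins; there `lcm A` has coefficient `-1` and dominates the other joins, so the sum
is negative. (For `|A| ≤ 1` the sum is `1` or `1 - a`.)
-/

open Finset

lemma sum_le_sum_range_card_of_antitone {M : Type*} [AddCommMonoid M] [PartialOrder M]
    [IsOrderedAddMonoid M] {f : ℕ → M} (hf : Antitone f) (s : Finset ℕ) :
    ∑ i ∈ s, f i ≤ ∑ i ∈ range #s, f i := by
  induction s using Finset.induction_on_max with
  | empty => simp
  | insert a s ha ih =>
    have ha_notMem : a ∉ s := fun h => (ha a h).false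
    have hcard : #s ≤ a := by
      simpa using card_le_card (fun b hb => mem_range.mpr (ha b hb) : s ⊆ range a)
    rw [sum_insert ha_notMem, card_insert_of_notMem ha_notMem, sum_range_succ, add_comm]
    exact add_le_add ih (hf hcard)

lemma sum_inv_odd_lt_one {E : Finset ℕ} (hodd : ∀ e ∈ E, Odd e) (hone : 1 ∉ E) (hcard : #E ≤ 6) :
    ∑ e ∈ E, (e : ℚ)⁻¹ < 1 := by
  let index (e : ℕ) : ℕ := (e - 3) / 2
  have heq : ∀ e ∈ E, e = 2 * index e + 3 := by
    intro e he
    have hne : e ≠ 1 := fun h => hone (h ▸ he)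
    obtain ⟨m, rfl⟩ := hodd e he
    grind
  have hinj : Set.InjOn index E := fun a ha b hb hab => by rw [heq a ha, heq b hb, hab]
  have hanti : Antitone fun i : ℕ => (2 * i + 3 : ℚ)⁻¹ := by
    intro i j hij
    dsimp only
    gcongr
  calc ∑ e ∈ E, (e : ℚ)⁻¹
      = ∑ i ∈ E.image index, (2 * i + 3 : ℚ)⁻¹ := by
        rw [sum_image hinj]
        refine sum_congr rfl fun e he => congrArg _ ?_
        exact_mod_cast heq e he
    _ ≤ ∑ i ∈ range #(E.image index), (2 * i + 3 : ℚ)⁻¹ :=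
        sum_le_sum_range_card_of_antitone hanti _
    _ ≤ ∑ i ∈ range 6, (2 * i + 3 : ℚ)⁻¹ :=
        sum_le_sum_of_subset_of_nonneg (range_mono (card_image_le.trans hcard))
          fun i _ _ => by positivity
    _ < 1 := by norm_num [sum_range_succ]

lemma sum_lt_of_forall_dvd_of_odd {r : ℕ} (hr : Odd r) {D : Finset ℕ} (hdvd : ∀ d ∈ D, d ∣ r)
    (hr_notMem : r ∉ D) (hcard : #D ≤ 6) : ∑ d ∈ D, d < r := by
  have hinj : Set.InjOn (r / ·) D := fun a ha b hb hab =>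
    (Nat.div_eq_iff_eq_of_dvd_dvd hr.pos.ne' (hdvd a ha) (hdvd b hb)).mp hab
  have hone : 1 ∉ D.image (r / ·) := by
    simp only [mem_image, not_exists, not_and]
    intro d hd h
    exact hr_notMem (Nat.eq_of_dvd_of_div_eq_one (hdvd d hd) h ▸ hd)
  have hodd : ∀ e ∈ D.image (r / ·), Odd e := by
    simp only [forall_mem_image]
    exact fun d hd => hr.of_dvd_nat (Nat.div_dvd_of_dvd (hdvd d hd))
  have hinv := sum_inv_odd_lt_one hodd hone (card_image_le.trans hcard)
  have hr0 : (0 : ℚ) < r := mod_cast hr.pos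
  rw [← Nat.cast_lt (α := ℚ)]
  calc ((∑ d ∈ D, d : ℕ) : ℚ)
      = r * ∑ e ∈ D.image (r / ·), (e : ℚ)⁻¹ := by
        rw [sum_image hinj, mul_sum, Nat.cast_sum]
        refine sum_congr rfl fun d hd => ?_
        rw [Nat.cast_div_charZero (hdvd d hd), inv_div, mul_div_cancel₀ _ hr0.ne']
    _ < r := mul_lt_of_lt_one_right hr0 hinv

lemma odd_finset_lcm {B : Finset ℕ} (hB : ∀ b ∈ B, Odd b) : Odd (B.lcm id) :=
  (prod_induction id Odd (fun _ _ => Odd.mul) odd_one hB).of_dvd_nat (lcm_dvd_prod B id)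

/-- The least common multiples of at least two elements of `A`: when `A` is an antichain under
divisibility, these are the elements of the join-semilattice generated by `A` that lie strictly
above the atoms. -/
def lcmJoins (A : Finset ℕ) : Finset ℕ :=
  {B ∈ A.powerset | 2 ≤ #B}.image fun B => B.lcm id

/-- The coefficient with which `r ∈ lcmJoins A` occurs in `altLcmSum A` once equal least common
multiples are collected. -/
def lcmJoinCoeff (A : Finset ℕ) (r : ℕ) : ℤ :=
  ∑ B ∈ A.powerset with 2 ≤ #B ∧ B.lcm id = r, (-1) ^ #B

/-- The inclusion–exclusion sum `∑ (-1)^|B| lcm B` over all subsets `B` of `A`, including the empty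
one, whose least common multiple is `1`. -/
def altLcmSum (A : Finset ℕ) : ℤ :=
  ∑ B ∈ A.powerset, (-1) ^ #B * (B.lcm id : ℕ)

section Joins

variable {A : Finset ℕ} {r s : ℕ}

lemma mem_lcmJoins : r ∈ lcmJoins A ↔ ∃ B ⊆ A, 2 ≤ #B ∧ B.lcm id = r := by
  simp [lcmJoins, and_assoc]

lemma subset_filter_dvd_lcm {B : Finset ℕ} (hB : B ⊆ A) : B ⊆ {a ∈ A | a ∣ B.lcm id} :=
  fun _ hb => mem_filter.mpr ⟨hB hb, dvd_lcm (f := id) hb⟩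

lemma two_le_card_filter_dvd (hr : r ∈ lcmJoins A) : 2 ≤ #{a ∈ A | a ∣ r} := by
  obtain ⟨B, hB, hcard, rfl⟩ := mem_lcmJoins.mp hr
  exact hcard.trans (card_le_card (subset_filter_dvd_lcm hB))

lemma dvd_of_filter_dvd_subset (hr : r ∈ lcmJoins A)
    (hrs : {a ∈ A | a ∣ r} ⊆ {a ∈ A | a ∣ s}) : r ∣ s := by
  obtain ⟨B, hB, -, rfl⟩ := mem_lcmJoins.mp hr
  exact lcm_dvd fun b hb => (mem_filter.mp (hrs (subset_filter_dvd_lcm hB hb))).2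

lemma card_filter_dvd_lt_of_dvd_of_ne (hs : s ∈ lcmJoins A) (hrs : r ∣ s) (hne : r ≠ s) :
    #{a ∈ A | a ∣ r} < #{a ∈ A | a ∣ s} := by
  refine card_lt_card ⟨monotone_filter_right A fun a _ ha => ha.trans hrs, fun hsub => ?_⟩
  exact hne (Nat.dvd_antisymm hrs (dvd_of_filter_dvd_subset hs hsub))

lemma filter_dvd_lcm_self (A : Finset ℕ) : {a ∈ A | a ∣ A.lcm id} = A :=
  filter_true_of_mem fun _ ha => dvd_lcm (f := id) ha

lemma lcm_mem_lcmJoins (hA : 2 ≤ #A) : A.lcm id ∈ lcmJoins A :=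
  mem_lcmJoins.mpr ⟨A, Subset.rfl, hA, rfl⟩

lemma dvd_lcm_of_mem_lcmJoins (hr : r ∈ lcmJoins A) : r ∣ A.lcm id := by
  obtain ⟨B, hB, -, rfl⟩ := mem_lcmJoins.mp hr
  exact lcm_mono hB

lemma two_le_card_of_mem_lcmJoins (hr : r ∈ lcmJoins A) : 2 ≤ #A :=
  (two_le_card_filter_dvd hr).trans (card_filter_le _ _)

lemma one_notMem_lcmJoins (A : Finset ℕ) : 1 ∉ lcmJoins A := by
  intro h
  obtain ⟨a, ha, b, hb, hab⟩ := one_lt_card.mp (two_le_card_filter_dvd h)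
  simp only [mem_filter, Nat.dvd_one] at ha hb
  exact hab (ha.2.trans hb.2.symm)

lemma disjoint_lcmJoins (hA : IsAntichain (· ∣ ·) (A : Set ℕ)) : Disjoint A (lcmJoins A) := by
  refine disjoint_left.mpr fun r hrA hr => ?_
  obtain ⟨a, ha, b, hb, hab⟩ := one_lt_card.mp (two_le_card_filter_dvd hr)
  simp only [mem_filter] at ha hb
  exact hab ((hA.eq ha.1 hrA ha.2).trans (hA.eq hb.1 hrA hb.2).symm)

lemma odd_of_mem_lcmJoins (hodd : ∀ a ∈ A, Odd a) (hr : r ∈ lcmJoins A) : Odd r := by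
  obtain ⟨B, hB, -, rfl⟩ := mem_lcmJoins.mp hr
  exact odd_finset_lcm fun b hb => hodd b (hB hb)

lemma sum_filter_dvd_lt (hodd : ∀ a ∈ A, Odd a) (hA : IsAntichain (· ∣ ·) (A : Set ℕ))
    (hcard : #A ≤ 6) (hr : r ∈ lcmJoins A) : ∑ a ∈ A with a ∣ r, a < r := by
  have hr_notMem : r ∉ A := fun h => disjoint_left.mp (disjoint_lcmJoins hA) h hr
  exact sum_lt_of_forall_dvd_of_odd (odd_of_mem_lcmJoins hodd hr)
    (fun a ha => (mem_filter.mp ha).2) (fun h => hr_notMem (mem_filter.mp h).1)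
    ((card_filter_le _ _).trans hcard)

lemma sum_lt_lcm (hodd : ∀ a ∈ A, Odd a) (hA : IsAntichain (· ∣ ·) (A : Set ℕ))
    (htwo : 2 ≤ #A) (hcard : #A ≤ 6) : ∑ a ∈ A, a < A.lcm id := by
  simpa only [filter_dvd_lcm_self] using sum_filter_dvd_lt hodd hA hcard (lcm_mem_lcmJoins htwo)

lemma sum_powerset_card_lt_two {α M : Type*} [AddCommMonoid M] (s : Finset α)
    (F : Finset α → M) :
    ∑ B ∈ s.powerset with ¬ 2 ≤ #B, F B = F ∅ + ∑ a ∈ s, F {a} := by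
  classical
  have hsplit : {B ∈ s.powerset | ¬ 2 ≤ #B} = powersetCard 0 s ∪ powersetCard 1 s := by
    ext B
    simp only [mem_filter, mem_powerset, mem_union, mem_powersetCard]
    grind
  rw [hsplit, sum_union (pairwise_disjoint_powersetCard s (by decide)), powersetCard_zero,
    powersetCard_one, sum_singleton, sum_map]
  rfl

lemma sum_powerset_neg_one_pow_mul_lcm (A : Finset ℕ) (g : ℕ → ℤ) :
    ∑ B ∈ A.powerset, (-1) ^ #B * g (B.lcm id) =
      g 1 - ∑ a ∈ A, g a + ∑ r ∈ lcmJoins A, lcmJoinCoeff A r * g r := by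
  have hjoins : ∑ B ∈ A.powerset with 2 ≤ #B, (-1) ^ #B * g (B.lcm id) =
      ∑ r ∈ lcmJoins A, lcmJoinCoeff A r * g r := by
    rw [← sum_fiberwise_of_maps_to (t := lcmJoins A) (g := fun B => B.lcm id)
      fun B hB => mem_image_of_mem _ hB]
    refine sum_congr rfl fun r _ => ?_
    rw [lcmJoinCoeff, sum_mul, filter_filter]
    exact sum_congr rfl fun B hB => by rw [(mem_filter.mp hB).2.2]
  rw [← sum_filter_add_sum_filter_not _ (fun B => 2 ≤ #B), hjoins, sum_powerset_card_lt_two]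
  simp only [card_empty, pow_zero, lcm_empty, one_mul, card_singleton, pow_one, lcm_singleton,
    id, normalize_eq, neg_one_mul, sum_neg_distrib]
  ring

lemma altLcmSum_eq (A : Finset ℕ) :
    altLcmSum A = 1 - ∑ a ∈ A, (a : ℤ) + ∑ r ∈ lcmJoins A, lcmJoinCoeff A r * r := by
  simpa only [altLcmSum, Nat.cast_one] using sum_powerset_neg_one_pow_mul_lcm A (fun r => (r : ℤ))

-- Inclusion–exclusion with the indicator of the divisors of `r` in place of the LCM itself.
lemma sum_lcmJoinCoeff_dvd (hr : r ∈ lcmJoins A) :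
    ∑ s ∈ lcmJoins A with s ∣ r, lcmJoinCoeff A s = #{a ∈ A | a ∣ r} - 1 := by
  have hnonempty : ({a ∈ A | a ∣ r}).Nonempty :=
    card_pos.mp (Nat.zero_lt_two.trans_le (two_le_card_filter_dvd hr))
  have hpowerset : ∑ B ∈ A.powerset, (-1 : ℤ) ^ #B * (if B.lcm id ∣ r then 1 else 0) = 0 := by
    simp only [mul_ite, mul_one, mul_zero, ← sum_filter]
    rw [← sum_powerset_neg_one_pow_card_of_nonempty hnonempty]
    refine sum_congr (Finset.ext fun B => ?_) fun _ _ => rfl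
    simp only [mem_filter, mem_powerset, Finset.lcm_dvd_iff, id]
    grind
  rw [sum_powerset_neg_one_pow_mul_lcm A fun s => if s ∣ r then 1 else 0] at hpowerset
  simp only [one_dvd, if_true, mul_ite, mul_one, mul_zero, ← sum_filter, sum_const,
    nsmul_eq_mul] at hpowerset
  linarith

lemma sum_lcmJoinCoeff (hA : 2 ≤ #A) : ∑ r ∈ lcmJoins A, lcmJoinCoeff A r = #A - 1 := by
  have h := sum_lcmJoinCoeff_dvd (lcm_mem_lcmJoins hA)
  rwa [filter_dvd_lcm_self, filter_true_of_mem fun _ => dvd_lcm_of_mem_lcmJoins] at h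

lemma lcmJoinCoeff_of_minimal (hr : r ∈ lcmJoins A) (hmin : ∀ s ∈ lcmJoins A, s ∣ r → s = r) :
    lcmJoinCoeff A r = #{a ∈ A | a ∣ r} - 1 := by
  rw [← sum_lcmJoinCoeff_dvd hr, eq_comm]
  have hbelow : {s ∈ lcmJoins A | s ∣ r} = {r} := by
    ext s
    simp only [mem_filter, mem_singleton]
    exact ⟨fun h => hmin s h.1 h.2, by rintro rfl; exact ⟨hr, dvd_rfl⟩⟩
  rw [hbelow, sum_singleton]

lemma lcmJoinCoeff_of_unique_cover (hr : r ∈ lcmJoins A) (hs : s ∈ lcmJoins A) (hsr : s ∣ r)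
    (hne : s ≠ r) (hcover : ∀ t ∈ lcmJoins A, t ∣ r → t ≠ r → t ∣ s) :
    lcmJoinCoeff A r = #{a ∈ A | a ∣ r} - #{a ∈ A | a ∣ s} := by
  have hr_not_dvd : ¬ r ∣ s := fun h => hne (Nat.dvd_antisymm hsr h)
  have hbelow : {t ∈ lcmJoins A | t ∣ r} = insert r {t ∈ lcmJoins A | t ∣ s} := by
    ext t
    simp only [mem_filter, mem_insert]
    constructor
    · exact fun ht => or_iff_not_imp_left.mpr fun htr => ⟨ht.1, hcover t ht.1 ht.2 htr⟩
    · rintro (rfl | ht)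
      exacts [⟨hr, dvd_rfl⟩, ⟨ht.1, ht.2.trans hsr⟩]
  have hsum_r := sum_lcmJoinCoeff_dvd hr
  have hsum_s := sum_lcmJoinCoeff_dvd hs
  have hr_notMem : r ∉ {t ∈ lcmJoins A | t ∣ s} := fun h => hr_not_dvd (mem_filter.mp h).2
  rw [hbelow, sum_insert hr_notMem, hsum_s] at hsum_r
  linarith

lemma one_le_lcmJoinCoeff_of_isChain (hchain : IsChain (· ∣ ·) (lcmJoins A : Set ℕ))
    (hr : r ∈ lcmJoins A) : 1 ≤ lcmJoinCoeff A r := by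
  rcases ({s ∈ lcmJoins A | s ∣ r ∧ s ≠ r}).eq_empty_or_nonempty with hempty | hnonempty
  · have hmin : ∀ s ∈ lcmJoins A, s ∣ r → s = r := fun s hs hsr =>
      not_not.mp fun hne => filter_eq_empty_iff.mp hempty hs ⟨hsr, hne⟩
    rw [lcmJoinCoeff_of_minimal hr hmin]
    have := two_le_card_filter_dvd hr
    lia
  · obtain ⟨s, hs, hmax⟩ := exists_max_image _ (fun s => #{a ∈ A | a ∣ s}) hnonempty
    obtain ⟨hsA, hsr, hne⟩ := mem_filter.mp hs
    have hcover : ∀ t ∈ lcmJoins A, t ∣ r → t ≠ r → t ∣ s := by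
      intro t ht htr htne
      by_contra hts
      have hst := (hchain.total ht hsA).resolve_left hts
      have hlt := card_filter_dvd_lt_of_dvd_of_ne ht hst fun h => hts (h ▸ dvd_rfl)
      exact (hmax t (mem_filter.mpr ⟨ht, htr, htne⟩)).not_gt hlt
    rw [lcmJoinCoeff_of_unique_cover hr hsA hsr hne hcover]
    have := card_filter_dvd_lt_of_dvd_of_ne hr hsr hne
    lia

lemma altLcmSum_pos_of_lcmJoinCoeff (hodd : ∀ a ∈ A, Odd a)
    (hA : IsAntichain (· ∣ ·) (A : Set ℕ)) (htwo : 2 ≤ #A) (hcard : #A ≤ 6)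
    (hnonneg : ∀ r ∈ lcmJoins A, 0 ≤ lcmJoinCoeff A r) (htop : 1 ≤ lcmJoinCoeff A (A.lcm id)) :
    0 < altLcmSum A := by
  have hsum : ∑ a ∈ A, (a : ℤ) < (A.lcm id : ℕ) := by
    rw [← Nat.cast_sum, Nat.cast_lt]
    exact sum_lt_lcm hodd hA htwo hcard
  have hjoins : ((A.lcm id : ℕ) : ℤ) ≤ ∑ r ∈ lcmJoins A, lcmJoinCoeff A r * r :=
    calc ((A.lcm id : ℕ) : ℤ) ≤ lcmJoinCoeff A (A.lcm id) * (A.lcm id : ℕ) :=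
          le_mul_of_one_le_left (Nat.cast_nonneg _) htop
      _ ≤ _ := single_le_sum (f := fun r : ℕ => lcmJoinCoeff A r * r)
          (fun r hr => mul_nonneg (hnonneg r hr) (Nat.cast_nonneg r)) (lcm_mem_lcmJoins htwo)
  rw [altLcmSum_eq]
  linarith

lemma altLcmSum_pos_of_isChain (hodd : ∀ a ∈ A, Odd a) (hA : IsAntichain (· ∣ ·) (A : Set ℕ))
    (htwo : 2 ≤ #A) (hcard : #A ≤ 6) (hchain : IsChain (· ∣ ·) (lcmJoins A : Set ℕ)) :
    0 < altLcmSum A :=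
  altLcmSum_pos_of_lcmJoinCoeff hodd hA htwo hcard
    (fun _ hr => zero_le_one.trans (one_le_lcmJoinCoeff_of_isChain hchain hr))
    (one_le_lcmJoinCoeff_of_isChain hchain (lcm_mem_lcmJoins htwo))

section IncomparablePair

variable {u v : ℕ}

lemma lcmJoins_eq_of_not_dvd (hu : u ∈ lcmJoins A) (hv : v ∈ lcmJoins A) (huv : ¬ u ∣ v)
    (hvu : ¬ v ∣ u) (hcard : #(lcmJoins A) ≤ 3) : lcmJoins A = {A.lcm id, u, v} := by
  have htop_u : A.lcm id ≠ u := fun h => hvu (h ▸ dvd_lcm_of_mem_lcmJoins hv)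
  have htop_v : A.lcm id ≠ v := fun h => huv (h ▸ dvd_lcm_of_mem_lcmJoins hu)
  have hne : u ≠ v := fun h => huv (h ▸ dvd_rfl)
  refine (eq_of_subset_of_card_le ?_ ?_).symm
  · simp [insert_subset_iff, hu, hv, lcm_mem_lcmJoins (two_le_card_of_mem_lcmJoins hu)]
  · rwa [card_eq_three.mpr ⟨_, _, _, htop_u, htop_v, hne, rfl⟩]

lemma not_dvd_and_dvd_of_mem_lcmJoins (hjoins : lcmJoins A = {A.lcm id, u, v}) (huv : ¬ u ∣ v)
    (hvu : ¬ v ∣ u) (hr : r ∈ lcmJoins A) : ¬ (r ∣ u ∧ r ∣ v) := by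
  rintro ⟨hru, hrv⟩
  have hv : v ∣ A.lcm id := dvd_lcm_of_mem_lcmJoins (by simp [hjoins])
  simp only [hjoins, mem_insert, mem_singleton] at hr
  rcases hr with rfl | rfl | rfl
  exacts [hvu (hv.trans hru), huv hrv, hvu hru]

lemma card_filter_dvd_inter_le_one (hjoins : lcmJoins A = {A.lcm id, u, v}) (huv : ¬ u ∣ v)
    (hvu : ¬ v ∣ u) : #({a ∈ A | a ∣ u} ∩ {a ∈ A | a ∣ v}) ≤ 1 := by
  by_contra! htwo
  have hmeet := mem_lcmJoins.mpr ⟨_, inter_subset_left.trans (filter_subset _ A), htwo, rfl⟩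
  refine not_dvd_and_dvd_of_mem_lcmJoins hjoins huv hvu hmeet ⟨?_, ?_⟩
  · exact lcm_dvd fun a ha => (mem_filter.mp (mem_inter.mp ha).1).2
  · exact lcm_dvd fun a ha => (mem_filter.mp (mem_inter.mp ha).2).2

lemma lcmJoinCoeff_of_not_dvd (hjoins : lcmJoins A = {A.lcm id, u, v}) (hvu : ¬ v ∣ u) :
    lcmJoinCoeff A u = #{a ∈ A | a ∣ u} - 1 := by
  have hv : v ∣ A.lcm id := dvd_lcm_of_mem_lcmJoins (by simp [hjoins])
  refine lcmJoinCoeff_of_minimal (by simp [hjoins]) fun s hs hsu => ?_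
  simp only [hjoins, mem_insert, mem_singleton] at hs
  rcases hs with rfl | rfl | rfl
  exacts [absurd (hv.trans hsu) hvu, rfl, absurd hsu hvu]

lemma sum_lcmJoins_of_not_dvd {M : Type*} [AddCommMonoid M]
    (hjoins : lcmJoins A = {A.lcm id, u, v}) (huv : ¬ u ∣ v) (hvu : ¬ v ∣ u) (f : ℕ → M) :
    ∑ r ∈ lcmJoins A, f r = f (A.lcm id) + (f u + f v) := by
  have hu : u ∣ A.lcm id := dvd_lcm_of_mem_lcmJoins (by simp [hjoins])
  have hv : v ∣ A.lcm id := dvd_lcm_of_mem_lcmJoins (by simp [hjoins])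
  have htop : A.lcm id ∉ ({u, v} : Finset ℕ) := by
    simp only [mem_insert, mem_singleton]
    rintro (h | h)
    exacts [hvu (h ▸ hv), huv (h ▸ hu)]
  have hne : u ≠ v := fun h => huv (h ▸ dvd_rfl)
  rw [hjoins, sum_insert htop, sum_pair hne]

lemma lcmJoinCoeff_lcm_of_not_dvd (hjoins : lcmJoins A = {A.lcm id, u, v}) (huv : ¬ u ∣ v)
    (hvu : ¬ v ∣ u) :
    lcmJoinCoeff A (A.lcm id) = #A + 1 - #{a ∈ A | a ∣ u} - #{a ∈ A | a ∣ v} := by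
  have hu : u ∈ lcmJoins A := by simp [hjoins]
  have hsum := sum_lcmJoinCoeff (two_le_card_of_mem_lcmJoins hu)
  rw [sum_lcmJoins_of_not_dvd hjoins huv hvu, lcmJoinCoeff_of_not_dvd hjoins hvu,
    lcmJoinCoeff_of_not_dvd (by rw [hjoins, pair_comm]) huv] at hsum
  linarith

lemma sum_lt_add_of_filter_dvd_union_eq (hodd : ∀ a ∈ A, Odd a)
    (hA : IsAntichain (· ∣ ·) (A : Set ℕ)) (hcard : #A ≤ 6) (hu : u ∈ lcmJoins A)
    (hv : v ∈ lcmJoins A) (hunion : {a ∈ A | a ∣ u} ∪ {a ∈ A | a ∣ v} = A) :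
    ∑ a ∈ A, a < u + v :=
  calc ∑ a ∈ A, a
      ≤ ∑ a ∈ {a ∈ A | a ∣ u} ∪ {a ∈ A | a ∣ v}, a +
          ∑ a ∈ {a ∈ A | a ∣ u} ∩ {a ∈ A | a ∣ v}, a := by
        rw [hunion]
        exact Nat.le_add_right _ _
    _ = ∑ a ∈ A with a ∣ u, a + ∑ a ∈ A with a ∣ v, a := sum_union_inter
    _ < u + v := add_lt_add (sum_filter_dvd_lt hodd hA hcard hu)
        (sum_filter_dvd_lt hodd hA hcard hv)

lemma altLcmSum_pos_of_not_dvd (hodd : ∀ a ∈ A, Odd a) (hA : IsAntichain (· ∣ ·) (A : Set ℕ))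
    (hcard : #A ≤ 6) (hjoins : lcmJoins A = {A.lcm id, u, v}) (huv : ¬ u ∣ v)
    (hvu : ¬ v ∣ u) : 0 < altLcmSum A := by
  have hu : u ∈ lcmJoins A := by simp [hjoins]
  have hv : v ∈ lcmJoins A := by simp [hjoins]
  have hu_coeff : 1 ≤ lcmJoinCoeff A u := by
    have := two_le_card_filter_dvd hu
    rw [lcmJoinCoeff_of_not_dvd hjoins hvu]
    lia
  have hv_coeff : 1 ≤ lcmJoinCoeff A v := by
    have := two_le_card_filter_dvd hv
    rw [lcmJoinCoeff_of_not_dvd (by rw [hjoins, pair_comm]) huv]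
    lia
  have htop_coeff := lcmJoinCoeff_lcm_of_not_dvd hjoins huv hvu
  have hinter_card := card_filter_dvd_inter_le_one hjoins huv hvu
  have hunion_inter := card_union_add_card_inter {a ∈ A | a ∣ u} {a ∈ A | a ∣ v}
  have hunion_sub : {a ∈ A | a ∣ u} ∪ {a ∈ A | a ∣ v} ⊆ A :=
    union_subset (filter_subset _ _) (filter_subset _ _)
  have hunion_card := card_le_card hunion_sub
  rcases eq_or_ne (lcmJoinCoeff A (A.lcm id)) 0 with hzero | hne
  · have hunion : {a ∈ A | a ∣ u} ∪ {a ∈ A | a ∣ v} = A :=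
      eq_of_subset_of_card_le hunion_sub (by lia)
    have hsum : ∑ a ∈ A, (a : ℤ) < u + v := by
      rw [← Nat.cast_sum]
      exact_mod_cast sum_lt_add_of_filter_dvd_union_eq hodd hA hcard hu hv hunion
    have hu_le : (u : ℤ) ≤ lcmJoinCoeff A u * u :=
      le_mul_of_one_le_left (Nat.cast_nonneg u) hu_coeff
    have hv_le : (v : ℤ) ≤ lcmJoinCoeff A v * v :=
      le_mul_of_one_le_left (Nat.cast_nonneg v) hv_coeff
    rw [altLcmSum_eq, sum_lcmJoins_of_not_dvd hjoins huv hvu, hzero]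
    linarith
  · have htop_one : 1 ≤ lcmJoinCoeff A (A.lcm id) := by lia
    refine altLcmSum_pos_of_lcmJoinCoeff hodd hA (two_le_card_of_mem_lcmJoins hu) hcard ?_ htop_one
    intro r hr
    simp only [hjoins, mem_insert, mem_singleton] at hr
    rcases hr with rfl | rfl | rfl <;> lia

end IncomparablePair

lemma altLcmSum_pos_of_card_lcmJoins_le (hodd : ∀ a ∈ A, Odd a)
    (hA : IsAntichain (· ∣ ·) (A : Set ℕ)) (htwo : 2 ≤ #A) (hcard : #A ≤ 6)
    (hjoins : #(lcmJoins A) ≤ 3) : 0 < altLcmSum A := by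
  by_cases hchain : IsChain (· ∣ ·) (lcmJoins A : Set ℕ)
  · exact altLcmSum_pos_of_isChain hodd hA htwo hcard hchain
  · simp only [IsChain, Set.Pairwise, not_forall, not_or] at hchain
    obtain ⟨u, hu, v, hv, -, huv, hvu⟩ := hchain
    exact altLcmSum_pos_of_not_dvd hodd hA hcard (lcmJoins_eq_of_not_dvd hu hv huv hvu hjoins)
      huv hvu

lemma card_filter_dvd_lt_card (hr : r ∈ lcmJoins A) (hne : r ≠ A.lcm id) :
    #{a ∈ A | a ∣ r} < #A := by
  have h := card_filter_dvd_lt_of_dvd_of_ne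
    (lcm_mem_lcmJoins (two_le_card_of_mem_lcmJoins hr)) (dvd_lcm_of_mem_lcmJoins hr) hne
  rwa [filter_dvd_lcm_self] at h

lemma lcmJoinCoeff_eq_one_of_card_eq_three (hA : #A = 3) (hr : r ∈ lcmJoins A)
    (hne : r ≠ A.lcm id) : lcmJoinCoeff A r = 1 := by
  have hlt := card_filter_dvd_lt_card hr hne
  have hmin : ∀ s ∈ lcmJoins A, s ∣ r → s = r := by
    intro s hs hsr
    by_contra hsne
    have htwo := two_le_card_filter_dvd hs
    have hlt' := card_filter_dvd_lt_of_dvd_of_ne hr hsr hsne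
    lia
  rw [lcmJoinCoeff_of_minimal hr hmin]
  have := two_le_card_filter_dvd hr
  lia

lemma altLcmSum_neg_of_card_eq_three (hodd : ∀ a ∈ A, Odd a) (hA : #A = 3)
    (hjoins : #(lcmJoins A) = 4) : altLcmSum A < 0 := by
  have htwo : 2 ≤ #A := by lia
  have htop := lcm_mem_lcmJoins htwo
  have hcoeff : ∀ r ∈ (lcmJoins A).erase (A.lcm id), lcmJoinCoeff A r = 1 := fun r hr =>
    lcmJoinCoeff_eq_one_of_card_eq_three hA (mem_of_mem_erase hr) (ne_of_mem_erase hr)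
  have hproper_card : #((lcmJoins A).erase (A.lcm id)) = 3 := by rw [card_erase_of_mem htop, hjoins]
  have htop_coeff : lcmJoinCoeff A (A.lcm id) = -1 := by
    have h := sum_lcmJoinCoeff htwo
    rw [← add_sum_erase _ _ htop, sum_congr rfl hcoeff] at h
    simp only [sum_const, hproper_card, hA, nsmul_eq_mul] at h
    lia
  have hproper_sum : ∑ r ∈ (lcmJoins A).erase (A.lcm id), (r : ℤ) < (A.lcm id : ℕ) := by
    rw [← Nat.cast_sum, Nat.cast_lt]
    exact sum_lt_of_forall_dvd_of_odd (odd_finset_lcm hodd)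
      (fun r hr => dvd_lcm_of_mem_lcmJoins (mem_of_mem_erase hr)) (notMem_erase _ _) (by lia)
  have hatoms : (1 : ℤ) ≤ ∑ a ∈ A, (a : ℤ) := by
    obtain ⟨a, ha⟩ := card_pos.mp (show 0 < #A by lia)
    calc (1 : ℤ) ≤ a := mod_cast (hodd a ha).pos
      _ ≤ ∑ a ∈ A, (a : ℤ) := single_le_sum (f := fun a : ℕ => (a : ℤ)) (by simp) ha
  have hproper : ∑ r ∈ (lcmJoins A).erase (A.lcm id), lcmJoinCoeff A r * r =
      ∑ r ∈ (lcmJoins A).erase (A.lcm id), (r : ℤ) :=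
    sum_congr rfl fun r hr => by rw [hcoeff r hr, one_mul]
  rw [altLcmSum_eq, ← add_sum_erase _ _ htop, htop_coeff, hproper]
  linarith

theorem altLcmSum_ne_zero (hodd : ∀ a ∈ A, Odd a) (hone : 1 ∉ A)
    (hA : IsAntichain (· ∣ ·) (A : Set ℕ)) (hcard : #A + #(lcmJoins A) ≤ 7) :
    altLcmSum A ≠ 0 := by
  rcases lt_or_ge #A 2 with hlt | htwo
  · have hempty : lcmJoins A = ∅ := eq_empty_of_forall_notMem fun r hr =>
      hlt.not_ge (two_le_card_of_mem_lcmJoins hr)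
    rw [altLcmSum_eq, hempty, sum_empty, add_zero, sub_ne_zero]
    rcases Nat.le_one_iff_eq_zero_or_eq_one.mp (Nat.lt_succ_iff.mp hlt) with hzero | hsingle
    · simp [card_eq_zero.mp hzero]
    · obtain ⟨a, rfl⟩ := card_eq_one.mp hsingle
      simpa [eq_comm] using hone
  have htop := lcm_mem_lcmJoins htwo
  have hjoins_pos : 0 < #(lcmJoins A) := card_pos.mpr ⟨_, htop⟩
  rcases le_or_gt #(lcmJoins A) 3 with hle | hgt
  · exact (altLcmSum_pos_of_card_lcmJoins_le hodd hA htwo (by lia) hle).ne'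
  · obtain ⟨u, hu, hne⟩ := exists_mem_ne (by lia : 1 < #(lcmJoins A)) (A.lcm id)
    have hthree : 2 < #A := (two_le_card_filter_dvd hu).trans_lt (card_filter_dvd_lt_card hu hne)
    exact (altLcmSum_neg_of_card_eq_three hodd (by lia) (by lia)).ne

end Joins

/-- The family `x` enumerates a GCD closed set. -/
def GcdClosed {ι : Type*} (x : ι → ℕ) : Prop :=
  ∀ i j, ∃ k, x k = Nat.gcd (x i) (x j)

section GcdClosed

variable {ι : Type*} [Fintype ι] {x : ι → ℕ}

/-- The zeta matrix of the divisibility order on the family `x`. -/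
def dvdMatrix (R : Type*) [Zero R] [One R] (x : ι → ℕ) : Matrix ι ι R :=
  Matrix.of fun i k => if x k ∣ x i then 1 else 0

lemma det_dvdMatrix [DecidableEq ι] {R : Type*} [CommRing R] (hpos : ∀ i, 0 < x i)
    (hinj : Function.Injective x) : (dvdMatrix R x).det = 1 := by
  let _ : LinearOrder ι := LinearOrder.lift' x hinj
  have htri : (dvdMatrix R x).IsLowerTriangular := by
    intro i k hik
    have hlt : x i < x k := hik
    exact if_neg fun hdvd => hlt.not_ge (Nat.le_of_dvd (hpos i) hdvd)
  have hdiag : ∀ i, dvdMatrix R x i i = 1 := fun i => if_pos dvd_rfl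
  have hdet := Matrix.det_of_isLowerTriangular _ htri
  simp only [hdiag, prod_const_one] at hdet
  convert hdet

lemma exists_forall_sum_dvd_eq {R : Type*} [CommRing R] (hpos : ∀ i, 0 < x i)
    (hinj : Function.Injective x) (f : ι → R) :
    ∃ α : ι → R, ∀ i, ∑ k with x k ∣ x i, α k = f i := by
  classical
  have hunit : IsUnit (dvdMatrix R x).det := by simp [det_dvdMatrix hpos hinj]
  refine ⟨(dvdMatrix R x)⁻¹.mulVec f, fun i => ?_⟩
  have hsolve : (dvdMatrix R x).mulVec ((dvdMatrix R x)⁻¹.mulVec f) = f := by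
    rw [Matrix.mulVec_mulVec, Matrix.mul_nonsing_inv _ hunit, Matrix.one_mulVec]
  simpa only [Matrix.mulVec, dotProduct, dvdMatrix, Matrix.of_apply, ite_mul, one_mul, zero_mul,
    ← sum_filter] using congrFun hsolve i

lemma lcmMatrix_eq [DecidableEq ι] (hpos : ∀ i, 0 < x i) (hgcd : GcdClosed x) {α : ι → ℚ}
    (hα : ∀ i, ∑ k with x k ∣ x i, α k = (x i : ℚ)⁻¹) :
    (Matrix.of fun i j => (Nat.lcm (x i) (x j) : ℚ)) =
      Matrix.diagonal (fun i => (x i : ℚ)) *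
        (dvdMatrix ℚ x * Matrix.diagonal α * (dvdMatrix ℚ x).transpose) *
        Matrix.diagonal (fun i => (x i : ℚ)) := by
  ext i j
  obtain ⟨l, hl⟩ := hgcd i j
  have hgcd_entry :
      (dvdMatrix ℚ x * Matrix.diagonal α * (dvdMatrix ℚ x).transpose) i j = (x l : ℚ)⁻¹ := by
    rw [← hα l, sum_filter, Matrix.mul_apply]
    refine sum_congr rfl fun k _ => ?_
    simp only [Matrix.mul_diagonal, Matrix.transpose_apply, dvdMatrix, Matrix.of_apply, hl,
      Nat.dvd_gcd_iff, ite_and]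
    split_ifs <;> simp
  have hgcd_mul_lcm : (x l : ℚ) * Nat.lcm (x i) (x j) = x i * x j := by
    rw [hl]
    exact_mod_cast Nat.gcd_mul_lcm (x i) (x j)
  have hl_ne : (x l : ℚ) ≠ 0 := Nat.cast_ne_zero.mpr (hpos l).ne'
  rw [Matrix.mul_diagonal, Matrix.diagonal_mul, hgcd_entry, Matrix.of_apply]
  field_simp
  linarith

lemma det_lcmMatrix_s6 [DecidableEq ι] (hpos : ∀ i, 0 < x i) (hinj : Function.Injective x)
    (hgcd : GcdClosed x) {α : ι → ℚ} (hα : ∀ i, ∑ k with x k ∣ x i, α k = (x i : ℚ)⁻¹) :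
    (Matrix.of fun i j => (Nat.lcm (x i) (x j) : ℚ)).det = ∏ k, (x k : ℚ) ^ 2 * α k := by
  rw [lcmMatrix_eq hpos hgcd hα]
  simp only [Matrix.det_mul, Matrix.det_diagonal, Matrix.det_transpose, det_dvdMatrix hpos hinj,
    prod_mul_distrib, prod_pow]
  ring

/-- The quotients `x k / x j` for `x j` dividing `x k`. Passing to them turns the lower interval of
`x k` upside down, so that GCDs become LCMs and `x k` itself becomes `1`. -/
def cofactors (x : ι → ℕ) (k : ι) : Finset ℕ :=
  ({j | x j ∣ x k} : Finset ι).image fun j => x k / x j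

/-- The atoms of `cofactors x k`: they correspond to the maximal proper divisors of `x k` in the
family `x`. -/
def minimalCofactors (x : ι → ℕ) (k : ι) : Finset ℕ :=
  {q ∈ cofactors x k | q ≠ 1 ∧ ∀ p ∈ cofactors x k, p ∣ q → p = 1 ∨ p = q}

variable {k : ι} {q r : ℕ}

lemma mem_cofactors (hpos : ∀ i, 0 < x i) : q ∈ cofactors x k ↔ ∃ j, x j * q = x k := by
  simp only [cofactors, mem_image, mem_filter_univ]
  constructor
  · rintro ⟨j, hj, rfl⟩
    exact ⟨j, Nat.mul_div_cancel' hj⟩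
  · rintro ⟨j, hj⟩
    exact ⟨j, ⟨q, hj.symm⟩, by rw [← hj, Nat.mul_div_cancel_left _ (hpos j)]⟩

lemma cofactor_pos (hpos : ∀ i, 0 < x i) (hq : q ∈ cofactors x k) : 0 < q := by
  obtain ⟨j, hj⟩ := (mem_cofactors hpos).mp hq
  exact Nat.pos_of_mul_pos_left (hj ▸ hpos k)

lemma gcd_mul_lcm_eq_of_mul_eq {a b N : ℕ} (hN : 0 < N) (ha : a * q = N) (hb : b * r = N) :
    Nat.gcd a b * Nat.lcm q r = N := by
  have hq : 0 < q := Nat.pos_of_mul_pos_left (ha ▸ hN)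
  refine Nat.eq_of_mul_eq_mul_right (Nat.gcd_pos_of_pos_left r hq) ?_
  calc Nat.gcd a b * Nat.lcm q r * Nat.gcd q r
      = Nat.gcd a b * (q * r) := by rw [mul_assoc, mul_comm (Nat.lcm q r), Nat.gcd_mul_lcm]
    _ = Nat.gcd (a * q * r) (b * r * q) := by
        rw [← Nat.gcd_mul_right]; ring_nf
    _ = N * Nat.gcd q r := by rw [ha, hb, Nat.gcd_mul_left, Nat.gcd_comm]

lemma lcm_mem_cofactors (hpos : ∀ i, 0 < x i) (hgcd : GcdClosed x) (hq : q ∈ cofactors x k)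
    (hr : r ∈ cofactors x k) : Nat.lcm q r ∈ cofactors x k := by
  obtain ⟨i, hi⟩ := (mem_cofactors hpos).mp hq
  obtain ⟨j, hj⟩ := (mem_cofactors hpos).mp hr
  obtain ⟨l, hl⟩ := hgcd i j
  exact (mem_cofactors hpos).mpr ⟨l, hl ▸ gcd_mul_lcm_eq_of_mul_eq (hpos k) hi hj⟩

lemma one_mem_cofactors (hpos : ∀ i, 0 < x i) (k : ι) : 1 ∈ cofactors x k :=
  (mem_cofactors hpos).mpr ⟨k, mul_one _⟩

lemma finset_lcm_mem_cofactors (hpos : ∀ i, 0 < x i) (hgcd : GcdClosed x) {B : Finset ℕ}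
    (hB : B ⊆ cofactors x k) : B.lcm id ∈ cofactors x k := by
  induction B using Finset.induction_on with
  | empty => simpa using one_mem_cofactors hpos k
  | insert b B _ ih =>
    rw [insert_subset_iff] at hB
    rw [lcm_insert]
    exact lcm_mem_cofactors hpos hgcd hB.1 (ih hB.2)

lemma minimalCofactors_subset (x : ι → ℕ) (k : ι) : minimalCofactors x k ⊆ cofactors x k :=
  filter_subset _ _

lemma one_notMem_minimalCofactors (x : ι → ℕ) (k : ι) : 1 ∉ minimalCofactors x k :=
  fun h => (mem_filter.mp h).2.1 rfl

lemma isAntichain_minimalCofactors (x : ι → ℕ) (k : ι) :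
    IsAntichain (· ∣ ·) (minimalCofactors x k : Set ℕ) := by
  intro p hp q hq hne hdvd
  have hp_ne_one : p ≠ 1 := (mem_filter.mp hp).2.1
  have hmin := (mem_filter.mp hq).2.2 p (minimalCofactors_subset x k hp) hdvd
  exact hmin.elim hp_ne_one hne

lemma exists_minimalCofactor_dvd (hpos : ∀ i, 0 < x i) (hq : q ∈ cofactors x k) (hne : q ≠ 1) :
    ∃ a ∈ minimalCofactors x k, a ∣ q := by
  obtain ⟨a, ha, hmin⟩ := exists_min_image {p ∈ cofactors x k | p ≠ 1 ∧ p ∣ q} id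
    ⟨q, mem_filter.mpr ⟨hq, hne, dvd_rfl⟩⟩
  obtain ⟨ha_mem, ha_ne, ha_dvd⟩ := mem_filter.mp ha
  refine ⟨a, mem_filter.mpr ⟨ha_mem, ha_ne, fun p hp hpa => ?_⟩, ha_dvd⟩
  refine or_iff_not_imp_left.mpr fun hp_ne => ?_
  exact (Nat.le_of_dvd (cofactor_pos hpos ha_mem) hpa).antisymm
    (hmin p (mem_filter.mpr ⟨hp, hp_ne, hpa.trans ha_dvd⟩))

lemma odd_of_mem_cofactors (hodd : ∀ i, Odd (x i)) (hq : q ∈ cofactors x k) : Odd q := by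
  obtain ⟨j, hj⟩ := (mem_cofactors fun i => (hodd i).pos).mp hq
  exact (hodd k).of_dvd_nat ⟨x j, by rw [← hj, mul_comm]⟩

lemma card_minimalCofactors_add_card_lcmJoins_lt (hpos : ∀ i, 0 < x i) (hgcd : GcdClosed x)
    (k : ι) :
    #(minimalCofactors x k) + #(lcmJoins (minimalCofactors x k)) < #{j | x j ∣ x k} := by
  have hone : 1 ∉ minimalCofactors x k ∪ lcmJoins (minimalCofactors x k) := by
    rw [mem_union, not_or]
    exact ⟨one_notMem_minimalCofactors x k, one_notMem_lcmJoins _⟩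
  have hjoins : lcmJoins (minimalCofactors x k) ⊆ cofactors x k := by
    intro r hr
    obtain ⟨B, hB, -, rfl⟩ := mem_lcmJoins.mp hr
    exact finset_lcm_mem_cofactors hpos hgcd (hB.trans (minimalCofactors_subset x k))
  have hsub : insert 1 (minimalCofactors x k ∪ lcmJoins (minimalCofactors x k)) ⊆ cofactors x k :=
    insert_subset (one_mem_cofactors hpos k) (union_subset (minimalCofactors_subset x k) hjoins)
  rw [← card_union_of_disjoint (disjoint_lcmJoins (isAntichain_minimalCofactors x k)),
    ← Nat.add_one_le_iff, ← card_insert_of_notMem hone]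
  exact (card_le_card hsub).trans card_image_le

lemma sum_mul_dvd_eq (hpos : ∀ i, 0 < x i) {α : ι → ℚ}
    (hα : ∀ i, ∑ k with x k ∣ x i, α k = (x i : ℚ)⁻¹) (hq : q ∈ cofactors x k) :
    ∑ j with x j * q ∣ x k, α j = q / x k := by
  have hq_pos := cofactor_pos hpos hq
  obtain ⟨l, hl⟩ := (mem_cofactors hpos).mp hq
  simp only [← hl, Nat.mul_dvd_mul_iff_right hq_pos, hα]
  have hl_ne : (x l : ℚ) ≠ 0 := Nat.cast_ne_zero.mpr (hpos l).ne'
  have hq_ne : (q : ℚ) ≠ 0 := Nat.cast_ne_zero.mpr hq_pos.ne'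
  push_cast
  field_simp

lemma mul_lcm_dvd_iff {a N : ℕ} {B : Finset ℕ} :
    a * B.lcm id ∣ N ↔ a ∣ N ∧ ∀ b ∈ B, a * b ∣ N := by
  constructor
  · exact fun h => ⟨(dvd_mul_right _ _).trans h,
      fun b hb => (mul_dvd_mul_left a (dvd_lcm (f := id) hb)).trans h⟩
  · rintro ⟨⟨c, rfl⟩, hB⟩
    rcases a.eq_zero_or_pos with rfl | ha
    · simp
    · exact mul_dvd_mul_left a (lcm_dvd fun b hb => Nat.dvd_of_mul_dvd_mul_left ha (hB b hb))

lemma forall_minimalCofactors_not_dvd_iff (hpos : ∀ i, 0 < x i) (hinj : Function.Injective x)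
    {j : ι} (hj : x j ∣ x k) :
    (∀ a ∈ minimalCofactors x k, ¬ x j * a ∣ x k) ↔ j = k := by
  constructor
  · intro hnot
    obtain ⟨q, hq⟩ := hj
    by_contra hne
    have hq_ne : q ≠ 1 := by
      rintro rfl
      exact hne (hinj (by simpa using hq.symm))
    obtain ⟨a, ha, hdvd⟩ :=
      exists_minimalCofactor_dvd hpos ((mem_cofactors hpos).mpr ⟨j, hq.symm⟩) hq_ne
    exact hnot a ha (hq ▸ mul_dvd_mul_left _ hdvd)
  · rintro rfl a ha hdvd
    have ha_one : a = 1 := by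
      rw [← Nat.dvd_one]
      exact Nat.dvd_of_mul_dvd_mul_left (hpos j) (by simpa using hdvd)
    exact one_notMem_minimalCofactors x j (ha_one ▸ ha)

theorem eq_altLcmSum_div (hpos : ∀ i, 0 < x i) (hinj : Function.Injective x)
    (hgcd : GcdClosed x) {α : ι → ℚ} (hα : ∀ i, ∑ k with x k ∣ x i, α k = (x i : ℚ)⁻¹) (k : ι) :
    α k = altLcmSum (minimalCofactors x k) / x k := by
  classical
  let multiples (a : ℕ) : Finset ι := {j | x j * a ∣ x k}
  let f (j : ι) : ℚ := if x j ∣ x k then α j else 0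
  have hinter : ∀ B ∈ (minimalCofactors x k).powerset,
      ∑ j ∈ B.inf multiples, f j = (B.lcm id : ℕ) / x k := by
    intro B hB
    have hB' := (mem_powerset.mp hB).trans (minimalCofactors_subset x k)
    rw [← sum_mul_dvd_eq hpos hα (finset_lcm_mem_cofactors hpos hgcd hB'), ← sum_filter]
    refine sum_congr (Finset.ext fun j => ?_) fun _ _ => rfl
    simp only [multiples, mem_filter, mem_inf, mem_univ, true_and, mul_lcm_dvd_iff, and_comm]
  have hcompl : {j ∈ (minimalCofactors x k).inf fun a => (multiples a)ᶜ | x j ∣ x k} = {k} := by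
    ext j
    simp only [multiples, mem_filter, mem_inf, mem_compl, mem_univ, true_and, mem_singleton]
    constructor
    · exact fun ⟨hnot, hj⟩ => (forall_minimalCofactors_not_dvd_iff hpos hinj hj).mp hnot
    · rintro rfl
      exact ⟨(forall_minimalCofactors_not_dvd_iff hpos hinj dvd_rfl).mpr rfl, dvd_rfl⟩
  calc α k = ∑ j ∈ (minimalCofactors x k).inf fun a => (multiples a)ᶜ, f j := by
        rw [← sum_filter, hcompl, sum_singleton]
    _ = ∑ B ∈ (minimalCofactors x k).powerset, (-1) ^ #B • ∑ j ∈ B.inf multiples, f j :=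
        inclusion_exclusion_sum_inf_compl _ _ _
    _ = altLcmSum (minimalCofactors x k) / x k := by
        rw [altLcmSum, Int.cast_sum, sum_div]
        refine sum_congr rfl fun B hB => ?_
        rw [hinter B hB]
        push_cast
        ring

end GcdClosed

theorem stmt_6_general {ι : Type*} [Fintype ι] [DecidableEq ι] (x : ι → ℕ)
    (hodd : ∀ i, Odd (x i)) (hinj : Function.Injective x) (hgcd : GcdClosed x)
    (hcard : ∀ k, #{j | x j ∣ x k} ≤ 8) :
    (Matrix.of fun i j => (Nat.lcm (x i) (x j) : ℤ)).det ≠ 0 := by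
  have hpos : ∀ i, 0 < x i := fun i => (hodd i).pos
  obtain ⟨α, hα⟩ := exists_forall_sum_dvd_eq hpos hinj fun i => (x i : ℚ)⁻¹
  have hx_ne : ∀ k, (x k : ℚ) ≠ 0 := fun k => Nat.cast_ne_zero.mpr (hpos k).ne'
  have hα_ne : ∀ k, α k ≠ 0 := by
    intro k
    have hjoins := card_minimalCofactors_add_card_lcmJoins_lt hpos hgcd k
    rw [eq_altLcmSum_div hpos hinj hgcd hα k]
    refine div_ne_zero (Int.cast_ne_zero.mpr ?_) (hx_ne k)
    exact altLcmSum_ne_zero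
      (fun a ha => odd_of_mem_cofactors hodd (minimalCofactors_subset x k ha))
      (one_notMem_minimalCofactors x k) (isAntichain_minimalCofactors x k)
      (Nat.le_of_lt_succ (hjoins.trans_le (hcard k)))
  have hdet : (Matrix.of fun i j => (Nat.lcm (x i) (x j) : ℚ)).det ≠ 0 := by
    rw [det_lcmMatrix_s6 hpos hinj hgcd hα]
    exact prod_ne_zero_iff.mpr fun k _ => mul_ne_zero (pow_ne_zero 2 (hx_ne k)) (hα_ne k)
  contrapose! hdet
  have hcast := congrArg (Int.castRingHom ℚ) hdet
  rw [RingHom.map_det, map_zero] at hcast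
  rw [← hcast]
  rfl

/-- If `S` is a GCD closed set of odd positive integers with at most 8 elements,
then the LCM matrix `[lcm (x i) (x j)]` is nonsingular. -/
theorem stmt_6 (n : ℕ) (hn : n ≤ 8) (x : Fin n → ℕ)
    (hodd : ∀ i, Odd (x i)) (hpos : ∀ i, 0 < x i) (hinj : Function.Injective x)
    (hgcd : ∀ i j, ∃ k, x k = Nat.gcd (x i) (x j)) :
    (Matrix.of fun i j => (Nat.lcm (x i) (x j) : ℤ)).det ≠ 0 :=
  stmt_6_general x hodd hinj hgcd fun _ => (card_le_univ _).trans (by simpa using hn)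
end

section
/- Let S = {x_1, …, x_n} be a set of distinct positive integers forming a chain under divisibility, i.e. x_1 | x_2 | … | x_n with x_1 < x_2 < … < x_n. Then for every real number α > 0, the power LCM matrix [S]_{N^α} with ij-entry lcm(x_i, x_j)^α is nonsingular (its determinant is nonzero). -/
/-!
Along a divisibility chain `lcm (x i) (x j) = x (max i j)`, so the power LCM matrix has entries
`a (max i j)` with `a i = x i ^ α`. Reversing the order of the indices turns `max` into `min`, and
subtracting from each row of `(b (min i j))` the row above it leaves an upper triangular matrix with
diagonal `b 0, b 1 - b 0, b 2 - b 1, …`. None of these vanishes when the values of `b` are distinct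
and nonzero.
-/

section MinMaxMatrix

variable {R : Type*} [CommRing R] {n : ℕ}

theorem det_of_apply_min (b : Fin (n + 1) → R) :
    (Matrix.of fun i j => b (min i j)).det = b 0 * ∏ i : Fin n, (b i.succ - b i.castSucc) := by
  let d : Fin (n + 1) → R := Fin.cons (b 0) fun i => b i.succ - b i.castSucc
  let T : Matrix (Fin (n + 1)) (Fin (n + 1)) R := Matrix.of fun i j => if i ≤ j then d i else 0
  have row_succ (i : Fin n) (j : Fin (n + 1)) :
      b (min i.succ j) = T i.succ j + 1 * b (min i.castSucc j) := by
    rcases le_or_gt i.succ j with hij | hji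
    · have hij' : i.castSucc ≤ j := Fin.castSucc_lt_succ.le.trans hij
      simp [T, d, hij, hij']
    · have hji' : j ≤ i.castSucc := Fin.le_castSucc_iff.mpr hji
      simp [T, hji.not_ge, hji.le, hji']
  have upper : T.IsUpperTriangular := fun i j hji => if_neg (not_le.mpr hji)
  calc (Matrix.of fun i j => b (min i j)).det
      = T.det := Matrix.det_eq_of_forall_row_eq_smul_add_pred (fun _ => 1)
          (fun j => by simp [T, d]) row_succ
    _ = ∏ i, d i := by simp [Matrix.det_of_isUpperTriangular upper, T]
    _ = b 0 * ∏ i : Fin n, (b i.succ - b i.castSucc) := Fin.prod_cons _ _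

theorem det_of_apply_max (a : Fin (n + 1) → R) :
    (Matrix.of fun i j => a (max i j)).det =
      a (Fin.last n) * ∏ i : Fin n, (a i.castSucc - a i.succ) := by
  calc (Matrix.of fun i j => a (max i j)).det
      = (Matrix.of fun i j => a (Fin.rev (min i j))).det := by
        rw [← Matrix.det_submatrix_equiv_self Fin.revPerm]
        congr 1
        ext i j
        simp [Fin.rev_anti.map_min]
    _ = a (Fin.last n) * ∏ i : Fin n, (a i.rev.castSucc - a i.rev.succ) := by
        simp [det_of_apply_min fun i => a i.rev, Fin.rev_succ, Fin.rev_castSucc]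
    _ = a (Fin.last n) * ∏ i : Fin n, (a i.castSucc - a i.succ) := by
        rw [← Equiv.prod_comp Fin.revPerm fun i => a i.castSucc - a i.succ]
        rfl

theorem det_of_apply_max_ne_zero [IsDomain R] {a : Fin n → R} (ha : ∀ i, a i ≠ 0)
    (hinj : Function.Injective a) : (Matrix.of fun i j => a (max i j)).det ≠ 0 := by
  cases n with
  | zero => simp
  | succ n =>
    rw [det_of_apply_max]
    exact mul_ne_zero (ha _) <| Finset.prod_ne_zero_iff.mpr fun i _ =>
      sub_ne_zero.mpr <| hinj.ne Fin.castSucc_lt_succ.ne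

end MinMaxMatrix

theorem lcm_apply_eq_apply_max {ι : Type*} [LinearOrder ι] {x : ι → ℕ}
    (hchain : ∀ i j, i ≤ j → x i ∣ x j) (i j : ι) : Nat.lcm (x i) (x j) = x (max i j) := by
  rcases le_total i j with hij | hji
  · rw [max_eq_right hij, Nat.lcm_eq_right (hchain i j hij)]
  · rw [max_eq_left hji, Nat.lcm_eq_left (hchain j i hji)]

theorem stmt_8_general (n : ℕ) (x : Fin n → ℕ) (hpos : ∀ i, 0 < x i)
    (hmono : StrictMono x) (hchain : ∀ i j : Fin n, i ≤ j → x i ∣ x j)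
    (α : ℝ) (hα : α ≠ 0) :
    (Matrix.of fun i j => (Nat.lcm (x i) (x j) : ℝ) ^ α).det ≠ 0 := by
  have rpow_ne_zero (i : Fin n) : (x i : ℝ) ^ α ≠ 0 :=
    (Real.rpow_pos_of_pos (Nat.cast_pos.mpr (hpos i)) α).ne'
  have rpow_injective : Function.Injective fun i => (x i : ℝ) ^ α := fun i j hij =>
    hmono.injective <| Nat.cast_injective <|
      (Real.rpow_left_inj (Nat.cast_nonneg (x i)) (Nat.cast_nonneg (x j)) hα).mp hij
  simp only [lcm_apply_eq_apply_max hchain]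
  exact det_of_apply_max_ne_zero rpow_ne_zero rpow_injective

/-- If `x 0 < x 1 < ⋯ < x (n-1)` are positive integers forming a chain under divisibility,
then for every real `α > 0` the power LCM matrix `[lcm (x i) (x j) ^ α]` is nonsingular. -/
theorem stmt_8 (n : ℕ) (x : Fin n → ℕ) (hpos : ∀ i, 0 < x i)
    (hmono : StrictMono x) (hchain : ∀ i j : Fin n, i ≤ j → x i ∣ x j)
    (α : ℝ) (hα : 0 < α) :
    (Matrix.of fun i j => (Nat.lcm (x i) (x j) : ℝ) ^ α).det ≠ 0 :=
  stmt_8_general n x hpos hmono hchain α hα.ne'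
end

section
/- Let S = {x_1, x_2, x_3, x_4} = {1, 3, 5, 45}. There exists a real number α_0 > 0 such that the 4×4 power LCM matrix with ij-entry lcm(x_i, x_j)^{α_0} is singular, i.e. has determinant 0. -/
/-!
For coprime `p` and `q > 1`, put `a = p ^ α` and `b = q ^ α`. Every entry of the power LCM matrix of
`{1, p, q, p² q}` is a monomial in `a` and `b`, and its determinant is
`a³ b² (a - 1)² (b - 1) (a (b - 1) - 1)`. The last factor vanishes for some `α ∈ (0, 1]` by the
intermediate value theorem, because `p ^ α (q ^ α - 1)` is `0` at `α = 0` and `p (q - 1) ≥ 1` at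
`α = 1`. The set `{1, 3, 5, 45}` is the case `p = 3`, `q = 5`.
-/

/-- The power LCM matrix `[S]_{N^α}` of a family `x` of natural numbers enumerating `S`: its
`(i, j)` entry is the real power `lcm (x i) (x j) ^ α`. -/
noncomputable def powerLCMMatrix {ι : Type*} (x : ι → ℕ) (α : ℝ) : Matrix ι ι ℝ :=
  Matrix.of fun i j => (Nat.lcm (x i) (x j) : ℝ) ^ α

/-- The power LCM matrix of `(1, p, q, p² q)` for coprime `p` and `q`, written in terms of
`a = p ^ α` and `b = q ^ α`, which are treated as free elements of a semiring. -/
def lcmMonomialMatrix {R : Type*} [Semiring R] (a b : R) : Matrix (Fin 4) (Fin 4) R :=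
  !![1, a, b, a ^ 2 * b;
     a, a, a * b, a ^ 2 * b;
     b, a * b, b, a ^ 2 * b;
     a ^ 2 * b, a ^ 2 * b, a ^ 2 * b, a ^ 2 * b]

theorem det_lcmMonomialMatrix {R : Type*} [CommRing R] (a b : R) :
    (lcmMonomialMatrix a b).det =
      a ^ 3 * b ^ 2 * (a - 1) ^ 2 * (b - 1) * (a * (b - 1) - 1) := by
  rw [lcmMonomialMatrix, Matrix.det_succ_row_zero, Fin.sum_univ_four]
  simp only [Matrix.det_fin_three, Matrix.submatrix_apply, Matrix.of_apply, Matrix.cons_val,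
    Fin.succAbove, Fin.reduceSucc, Fin.reduceCastSucc, Fin.reduceLT, Fin.coe_ofNat_eq_mod,
    Fin.isValue, ↓reduceIte]
  ring

theorem powerLCMMatrix_eq_lcmMonomialMatrix {p q : ℕ} (hpq : p.Coprime q) (α : ℝ) :
    powerLCMMatrix ![1, p, q, p ^ 2 * q] α =
      lcmMonomialMatrix ((p : ℝ) ^ α) ((q : ℝ) ^ α) := by
  have lcm_p_q : p.lcm q = p * q := hpq.lcm_eq_mul
  have lcm_p_top : p.lcm (p ^ 2 * q) = p ^ 2 * q :=
    Nat.lcm_eq_right ((dvd_pow_self p two_ne_zero).mul_right q)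
  have lcm_q_top : q.lcm (p ^ 2 * q) = p ^ 2 * q := Nat.lcm_eq_right (dvd_mul_left q _)
  have mul_rpow : ((p : ℝ) * q) ^ α = (p : ℝ) ^ α * (q : ℝ) ^ α :=
    Real.mul_rpow p.cast_nonneg q.cast_nonneg
  have sq_mul_rpow : ((p : ℝ) ^ 2 * q) ^ α = ((p : ℝ) ^ α) ^ 2 * (q : ℝ) ^ α := by
    rw [Real.mul_rpow (by positivity) q.cast_nonneg, Real.rpow_pow_comm p.cast_nonneg]
  ext i j
  fin_cases i <;> fin_cases j <;>
    simp [powerLCMMatrix, lcmMonomialMatrix, lcm_p_q, lcm_p_top, lcm_q_top, mul_rpow,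
      sq_mul_rpow, Nat.lcm_comm q p, Nat.lcm_comm (p ^ 2 * q)]

theorem exists_pos_rpow_mul_rpow_sub_one_eq_one {p q : ℝ} (hp : 0 < p)
    (hpq : 1 ≤ p * (q - 1)) : ∃ α : ℝ, 0 < α ∧ p ^ α * (q ^ α - 1) = 1 := by
  have hq : 0 < q := by
    have : 0 < q - 1 := pos_of_mul_pos_right (one_pos.trans_le hpq) hp.le
    linarith
  have hcont : Continuous fun α : ℝ => p ^ α * (q ^ α - 1) :=
    (Real.continuous_const_rpow hp.ne').mul
      ((Real.continuous_const_rpow hq.ne').sub continuous_const)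
  obtain ⟨α, hα, hα_eq⟩ := intermediate_value_Ioc zero_le_one hcont.continuousOn
    (show (1 : ℝ) ∈ Set.Ioc _ _ by simpa using hpq)
  exact ⟨α, hα.1, hα_eq⟩

theorem stmt_9_general {p q : ℕ} (hpq : p.Coprime q) (hq : 1 < q) :
    ∃ α₀ : ℝ, 0 < α₀ ∧ (powerLCMMatrix ![1, p, q, p ^ 2 * q] α₀).det = 0 := by
  have hp : p ≠ 0 := by
    rintro rfl
    exact hq.ne' ((Nat.coprime_zero_left q).mp hpq)
  have hp_one : (1 : ℝ) ≤ p := by exact_mod_cast Nat.one_le_iff_ne_zero.mpr hp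
  have hq_two : (2 : ℝ) ≤ q := by exact_mod_cast hq
  obtain ⟨α, hα, hroot⟩ := exists_pos_rpow_mul_rpow_sub_one_eq_one (p := p) (q := q)
    (by positivity) (one_le_mul_of_one_le_of_one_le hp_one (by linarith))
  exact ⟨α, hα, by
    rw [powerLCMMatrix_eq_lcmMonomialMatrix hpq, det_lcmMonomialMatrix, hroot, sub_self, mul_zero]⟩

/-- For `S = {1, 3, 5, 45}` there is a real `α₀ > 0` such that the power LCM matrix
`[lcm (x i) (x j) ^ α₀]` is singular. -/
theorem stmt_9 :
    ∃ α₀ : ℝ, 0 < α₀ ∧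
      (Matrix.of fun i j =>
        (Nat.lcm (![1, 3, 5, 45] i) (![1, 3, 5, 45] j) : ℝ) ^ α₀).det = 0 :=
  stmt_9_general (p := 3) (q := 5) (by norm_num) (by norm_num)
end

section
/- Let S' = {x_1, x_2, x_3, x_4} = {1, 3, 5, 15}. For every real number α > 0, the 4×4 power LCM matrix with ij-entry lcm(x_i, x_j)^α is nonsingular (its determinant is nonzero). -/
/-!
When every `x i` is coprime to every `y j`, `lcm (x i * y j) (x i' * y j')` factors as
`lcm (x i) (x i') * lcm (y j) (y j')`, so the power LCM matrix of the products `x i * y j` is the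
Kronecker product of the two power LCM matrices. The set `{1, m, n, m * n}` consists of the
products of `{1, n}` and `{1, m}`, which reduces its determinant to two `2 × 2` determinants.
-/

open scoped Kronecker

/-- The power LCM matrix `[S]_{N^α}` of a family `x` enumerating `S`; the family is allowed to be
indexed by any type, so that products of sets can be indexed by pairs. -/
noncomputable def powLcmMatrix {ι : Type*} (x : ι → ℕ) (α : ℝ) : Matrix ι ι ℝ :=
  Matrix.of fun i j => (Nat.lcm (x i) (x j) : ℝ) ^ α

theorem lcm_mul_mul_of_coprime {a b c d : ℕ} (hac : a.Coprime c) (had : a.Coprime d)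
    (hbc : b.Coprime c) (hbd : b.Coprime d) :
    (a * c).lcm (b * d) = a.lcm b * c.lcm d := by
  have hlcm : (a.lcm b).Coprime (c.lcm d) :=
    Nat.Coprime.of_dvd (Nat.lcm_dvd_mul a b) (Nat.lcm_dvd_mul c d)
      ((hac.mul_right had).mul_left (hbc.mul_right hbd))
  rw [← hac.lcm_eq_mul, ← hbd.lcm_eq_mul, ← hlcm.lcm_eq_mul]
  ac_rfl

theorem powLcmMatrix_mul_eq_kronecker {ι κ : Type*} {x : ι → ℕ} {y : κ → ℕ}
    (hxy : ∀ i j, (x i).Coprime (y j)) (α : ℝ) :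
    powLcmMatrix (fun p : ι × κ => x p.1 * y p.2) α =
      powLcmMatrix x α ⊗ₖ powLcmMatrix y α := by
  ext ⟨i, j⟩ ⟨i', j'⟩
  simp only [powLcmMatrix, Matrix.kronecker_apply, Matrix.of_apply]
  rw [lcm_mul_mul_of_coprime (hxy i j) (hxy i j') (hxy i' j) (hxy i' j'), Nat.cast_mul,
    Real.mul_rpow (Nat.cast_nonneg _) (Nat.cast_nonneg _)]

theorem det_powLcmMatrix_comp_equiv {ι κ : Type*} [Fintype ι] [DecidableEq ι] [Fintype κ]
    [DecidableEq κ] (e : κ ≃ ι) (x : ι → ℕ) (α : ℝ) :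
    (powLcmMatrix (x ∘ e) α).det = (powLcmMatrix x α).det :=
  Matrix.det_submatrix_equiv_self e (powLcmMatrix x α)

theorem det_powLcmMatrix_one_pair (n : ℕ) (α : ℝ) :
    (powLcmMatrix ![1, n] α).det = (n : ℝ) ^ α * (1 - (n : ℝ) ^ α) := by
  simp [powLcmMatrix, Matrix.det_fin_two, mul_sub]

theorem det_powLcmMatrix_one_pair_ne_zero {n : ℕ} (hn : 1 < n) {α : ℝ} (hα : α ≠ 0) :
    (powLcmMatrix ![1, n] α).det ≠ 0 := by
  have hpos : (0 : ℝ) < n := by positivity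
  have hpow : (n : ℝ) ^ α ≠ 1 := by
    rw [← Real.one_rpow α, Ne, Real.rpow_left_inj hpos.le zero_le_one hα]
    exact_mod_cast hn.ne'
  rw [det_powLcmMatrix_one_pair]
  exact mul_ne_zero (Real.rpow_pos_of_pos hpos α).ne' (sub_ne_zero.mpr hpow.symm)

theorem det_powLcmMatrix_of_coprime {m n : ℕ} (hmn : m.Coprime n) (α : ℝ) :
    (powLcmMatrix ![1, m, n, m * n] α).det =
      (powLcmMatrix ![1, n] α).det ^ 2 * (powLcmMatrix ![1, m] α).det ^ 2 := by
  have hprod : ![1, m, n, m * n] ∘ (finProdFinEquiv : Fin 2 × Fin 2 ≃ Fin 4) =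
      fun p => ![1, n] p.1 * ![1, m] p.2 := by
    ext ⟨i, j⟩
    fin_cases i <;> fin_cases j <;> simp [finProdFinEquiv, mul_comm]
  have hcoprime : ∀ i j : Fin 2, (![1, n] i).Coprime (![1, m] j) := by
    simpa [Fin.forall_fin_two] using hmn.symm
  rw [← det_powLcmMatrix_comp_equiv (finProdFinEquiv : Fin 2 × Fin 2 ≃ Fin 4), hprod,
    powLcmMatrix_mul_eq_kronecker hcoprime, Matrix.det_kronecker, Fintype.card_fin]

theorem stmt_10_general {m n : ℕ} (hm : 1 < m) (hn : 1 < n) (hmn : m.Coprime n) {α : ℝ}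
    (hα : α ≠ 0) : (powLcmMatrix ![1, m, n, m * n] α).det ≠ 0 := by
  rw [det_powLcmMatrix_of_coprime hmn]
  exact mul_ne_zero (pow_ne_zero 2 (det_powLcmMatrix_one_pair_ne_zero hn hα))
    (pow_ne_zero 2 (det_powLcmMatrix_one_pair_ne_zero hm hα))

/-- For `S' = {1, 3, 5, 15}` and every real `α > 0` the power LCM matrix
`[lcm (x i) (x j) ^ α]` is nonsingular. -/
theorem stmt_10 (α : ℝ) (hα : 0 < α) :
    (Matrix.of fun i j =>
      (Nat.lcm (![1, 3, 5, 15] i) (![1, 3, 5, 15] j) : ℝ) ^ α).det ≠ 0 :=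
  stmt_10_general (m := 3) (n := 5) (by norm_num) (by norm_num) (by norm_num) hα.ne'
end

section
/- Let (L, ⪯) be a finite meet semilattice with n elements. Assume there exist elements x, y_1, …, y_m ∈ L with m ≥ 2 such that y_1, …, y_m are exactly the elements covered by x and μ_L(y, x) > 0, where y = y_1 ∧ ⋯ ∧ y_m. Then there exist a GCD closed set S = {x_1, …, x_n} of positive integers with (S, |) order-isomorphic to (L, ⪯) and a real number α_0 > 0 such that the power LCM matrix with ij-entry lcm(x_i, x_j)^{α_0} is singular (has determinant 0). -/
open IncidenceAlgebra

/-!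
Label the elements of `L` by distinct primes `p w` and put `f z = ∏ w ≤ z, p w`, so that
`gcd (f a) (f b) = f (a ⊓ b)`. Then `lcm (f a) (f b) ^ α = f a ^ α * f b ^ α * f (a ⊓ b) ^ (-α)`,
and by Weisner's theorem the column `μ(·, x)` annihilates the meet matrix `f (a ⊓ b) ^ (-α)` as
soon as `h α = ∑ b, μ(b, x) * f b ^ (-α)` vanishes. Now `h 0 = ∑ b, μ(b, x) = 0` and, by Möbius
inversion of `log (f b) = ∑ w ≤ b, log (p w)`, the derivative of `h` at `0` is `-log (p x) < 0`, so
`h` is negative just to the right of `0`. Since `μ(·, x)` is supported on `[y, x]`, the term at `y`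
dominates `h` at infinity, where `h` therefore has the sign of `μ(y, x) > 0`. Hence `h` has a zero
`α₀ > 0`.
-/

section Moebius

lemma intCast_mu {α : Type*} [PartialOrder α] [LocallyFiniteOrder α] [DecidableEq α]
    (𝕜 : Type*) [Ring 𝕜] (a b : α) : ((mu ℤ a b : ℤ) : 𝕜) = mu 𝕜 a b := by
  induction hn : (Finset.Ico a b).card using Nat.strong_induction_on generalizing b with
  | _ n ih =>
    subst hn
    rw [mu_apply, mu_apply]
    split_ifs with hab
    · exact Int.cast_one
    · push_cast
      congr! 2 with c hc
      have hsub : Finset.Ico a c ⊆ Finset.Ico a b :=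
        Finset.Ico_subset_Ico_right (Finset.mem_Ico.1 hc).2.le
      have hssub : Finset.Ico a c ⊂ Finset.Ico a b :=
        ⟨hsub, fun h ↦ Finset.right_notMem_Ico (h hc)⟩
      exact ih _ (Finset.card_lt_card hssub) c rfl

variable {L 𝕜 : Type*} [SemilatticeInf L] [Fintype L] [DecidableEq L] [LocallyFiniteOrder L]
  [Ring 𝕜] {x a : L}

/-- The dual form of **Weisner's theorem**. -/
theorem sum_mu_filter_inf_eq_zero (hxa : ¬ x ≤ a) (c : L) :
    ∑ b with a ⊓ b = c, mu 𝕜 b x = 0 := by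
  classical
  induction c using WellFoundedGT.induction with
  | ind c ih =>
    by_cases hca : c ≤ a
    · calc
        ∑ b with a ⊓ b = c, mu 𝕜 b x
          = ∑ d with c ≤ d, ∑ b with a ⊓ b = d, mu 𝕜 b x :=
            (Finset.sum_eq_single_of_mem c (by simp) fun d hd hdc ↦
              ih d ((Finset.mem_filter.1 hd).2.lt_of_ne' hdc)).symm
        _ = ∑ b with c ≤ b, mu 𝕜 b x := by
            simp [Finset.sum_fiberwise_eq_sum_filter, hca]
        _ = ∑ b ∈ Finset.Icc c x, mu 𝕜 b x :=
            (Finset.sum_subset (fun b hb ↦ by simp [(Finset.mem_Icc.1 hb).1]) fun b hb hb' ↦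
              apply_eq_zero_of_not_le (fun hbx ↦ hb' (by simp_all)) _).symm
        _ = 0 := by
            rw [sum_Icc_mu_left, if_neg fun hcx : c = x ↦ hxa (hcx ▸ hca)]
    · refine Finset.sum_eq_zero fun b hb ↦ absurd ?_ hca
      exact (Finset.mem_filter.1 hb).2 ▸ inf_le_left

lemma sum_mu_mul_apply_inf_of_not_le (hxa : ¬ x ≤ a) (g : L → 𝕜) :
    ∑ b, mu 𝕜 b x * g (a ⊓ b) = 0 := by
  rw [← Finset.sum_fiberwise Finset.univ (a ⊓ ·)]
  refine Finset.sum_eq_zero fun c _ ↦ ?_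
  calc
    ∑ b with a ⊓ b = c, mu 𝕜 b x * g (a ⊓ b)
      = (∑ b with a ⊓ b = c, mu 𝕜 b x) * g c := by
        rw [Finset.sum_mul]
        exact Finset.sum_congr rfl fun b hb ↦ by rw [(Finset.mem_filter.1 hb).2]
    _ = 0 := by rw [sum_mu_filter_inf_eq_zero hxa, zero_mul]

lemma sum_mu_mul_apply_inf_of_le (hxa : x ≤ a) (g : L → 𝕜) :
    ∑ b, mu 𝕜 b x * g (a ⊓ b) = ∑ b, mu 𝕜 b x * g b := by
  refine Finset.sum_congr rfl fun b _ ↦ ?_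
  by_cases hbx : b ≤ x
  · rw [inf_eq_right.2 (hbx.trans hxa)]
  · rw [apply_eq_zero_of_not_le hbx, zero_mul, zero_mul]

variable (𝕜) in
lemma sum_mu_eq_zero_of_lt {y : L} (hyx : y < x) : ∑ b, mu 𝕜 b x = 0 := by
  simpa using sum_mu_mul_apply_inf_of_not_le hyx.not_ge (1 : L → 𝕜)

omit [Fintype L] in
lemma le_of_mu_ne_zero [Finite L] {y z : L} (hyx : y ≤ x) (hy : ∀ u, u ⋖ x → y ≤ u)
    (hz : mu 𝕜 z x ≠ 0) : y ≤ z := by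
  have := Fintype.ofFinite L
  induction z using WellFoundedGT.induction with
  | ind z ih =>
    have hzx : z ≤ x := by
      by_contra h
      exact hz (apply_eq_zero_of_not_le h _)
    obtain rfl | hzx := hzx.eq_or_lt
    · exact hyx
    obtain ⟨u, hzu, hux⟩ := exists_le_covBy_of_lt hzx
    obtain ⟨b, hb, hbz, hbx⟩ : ∃ b, u ⊓ b = z ∧ b ≠ z ∧ mu 𝕜 b x ≠ 0 := by
      by_contra! h
      refine hz ?_
      rw [← sum_mu_filter_inf_eq_zero (𝕜 := 𝕜) hux.lt.not_ge z]
      exact (Finset.sum_eq_single_of_mem z (by simp [hzu]) fun b hb hbz ↦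
        h b (Finset.mem_filter.1 hb).2 hbz).symm
    have hzb : z < b := (hb ▸ inf_le_right : z ≤ b).lt_of_ne' hbz
    exact hb ▸ le_inf (hy u hux) (ih b hzb hbx)

lemma sum_mu_mul_sum_Iic [OrderBot L] (g : L → 𝕜) (x : L) :
    ∑ b, mu 𝕜 b x * ∑ w ∈ Finset.Iic b, g w = g x := by
  rw [moebius_inversion_bot g _ (fun _ ↦ rfl) x]
  refine (Finset.sum_subset (Finset.subset_univ _) fun b _ hb ↦ ?_).symm
  rw [apply_eq_zero_of_not_le (mt Finset.mem_Iic.2 hb), zero_mul]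

end Moebius

section Matrix

variable {L : Type*} [SemilatticeInf L] [Fintype L] [DecidableEq L]

lemma det_apply_inf_eq_zero [LocallyFiniteOrder L] {𝕜 : Type*} [CommRing 𝕜] [IsDomain 𝕜]
    (g : L → 𝕜) {x : L} (hg : ∑ b, mu 𝕜 b x * g b = 0) :
    (Matrix.of fun a b ↦ g (a ⊓ b)).det = 0 := by
  refine Matrix.exists_mulVec_eq_zero_iff.1 ⟨fun b ↦ mu 𝕜 b x, ?_, ?_⟩
  · exact Function.ne_iff.2 ⟨x, by simp⟩
  · ext a
    simp only [Matrix.mulVec, dotProduct, Matrix.of_apply, mul_comm (g _), Pi.zero_apply]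
    by_cases hxa : x ≤ a
    · rw [sum_mu_mul_apply_inf_of_le hxa, hg]
    · exact sum_mu_mul_apply_inf_of_not_le hxa g

lemma det_lcm_rpow {f : L → ℕ} (hpos : ∀ a, 0 < f a)
    (hgcd : ∀ a b, Nat.gcd (f a) (f b) = f (a ⊓ b)) (α : ℝ) :
    (Matrix.of fun a b ↦ (Nat.lcm (f a) (f b) : ℝ) ^ α).det =
      (∏ a, (f a : ℝ) ^ α) *
        ((∏ a, (f a : ℝ) ^ α) * (Matrix.of fun a b ↦ (f (a ⊓ b) : ℝ)⁻¹ ^ α).det) := by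
  rw [← Matrix.det_mul_row, ← Matrix.det_mul_column]
  congr 1
  ext a b
  have hlcm : (Nat.lcm (f a) (f b) : ℝ) = f a * (f b * (f (a ⊓ b) : ℝ)⁻¹) := by
    have hinf : (f (a ⊓ b) : ℝ) ≠ 0 := Nat.cast_ne_zero.2 (hpos _).ne'
    rw [← mul_assoc, eq_mul_inv_iff_mul_eq₀ hinf, mul_comm, ← hgcd]
    exact_mod_cast Nat.gcd_mul_lcm (f a) (f b)
  simp only [Matrix.of_apply]
  rw [hlcm, Real.mul_rpow (by positivity) (by positivity),
    Real.mul_rpow (by positivity) (by positivity)]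

end Matrix

section ExponentialSum

open Filter Topology

variable {ι : Type*} [Fintype ι] {c r : ι → ℝ}

lemma hasDerivAt_sum_mul_rpow (hr : ∀ i, 0 < r i) (α : ℝ) :
    HasDerivAt (fun α : ℝ ↦ ∑ i, c i * r i ^ α) (∑ i, c i * (r i ^ α * Real.log (r i))) α :=
  HasDerivAt.fun_sum fun i _ ↦
    ((Real.hasStrictDerivAt_const_rpow (hr i) α).hasDerivAt).const_mul (c i)

lemma eventually_sum_mul_rpow_neg (hr : ∀ i, 0 < r i) (hsum : ∑ i, c i = 0)
    (hlog : ∑ i, c i * Real.log (r i) < 0) :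
    ∀ᶠ α in 𝓝[>] (0 : ℝ), ∑ i, c i * r i ^ α < 0 := by
  have hderiv : deriv (fun α : ℝ ↦ ∑ i, c i * r i ^ α) 0 < 0 := by
    simpa [(hasDerivAt_sum_mul_rpow hr 0).deriv] using hlog
  have hsign := eventually_nhdsWithin_sign_eq_of_deriv_neg hderiv (by simpa using hsum)
  filter_upwards [nhdsWithin_le_nhds hsign, self_mem_nhdsWithin] with α hα (hα₀ : 0 < α)
  rwa [zero_sub, sign_neg (neg_lt_zero.2 hα₀), sign_eq_neg_one_iff] at hα

lemma eventually_sum_mul_rpow_pos (hr : ∀ i, 0 < r i) {j : ι} (hj : 0 < c j)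
    (hlt : ∀ i, i ≠ j → c i ≠ 0 → r i < r j) :
    ∀ᶠ α : ℝ in atTop, 0 < ∑ i, c i * r i ^ α := by
  classical
  have hlim : Tendsto (fun α : ℝ ↦ ∑ i, c i * (r i / r j) ^ α) atTop
      (𝓝 (∑ i, if i = j then c j else 0)) := by
    refine tendsto_finsetSum _ fun i _ ↦ ?_
    split_ifs with hij
    · subst hij
      simp [div_self (hr i).ne']
    obtain hci | hci := eq_or_ne (c i) 0
    · simp [hci]
    · have hratio : 0 < r i / r j := div_pos (hr i) (hr j)
      simpa using (tendsto_rpow_atTop_of_base_lt_one _ (by linarith)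
        ((div_lt_one (hr j)).2 (hlt i hij hci))).const_mul (c i)
  rw [Finset.sum_ite_eq' Finset.univ j, if_pos (Finset.mem_univ j)] at hlim
  filter_upwards [hlim.eventually_const_lt hj] with α hα
  have hscale : ∑ i, c i * r i ^ α = r j ^ α * ∑ i, c i * (r i / r j) ^ α := by
    rw [Finset.mul_sum]
    refine Finset.sum_congr rfl fun i _ ↦ ?_
    rw [Real.div_rpow (hr i).le (hr j).le, mul_left_comm,
      mul_div_cancel₀ _ (Real.rpow_pos_of_pos (hr j) α).ne']
  rw [hscale]
  exact mul_pos (Real.rpow_pos_of_pos (hr j) α) hα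

theorem exists_pos_sum_mul_rpow_eq_zero (hr : ∀ i, 0 < r i) (hsum : ∑ i, c i = 0)
    (hlog : ∑ i, c i * Real.log (r i) < 0) {j : ι} (hj : 0 < c j)
    (hlt : ∀ i, i ≠ j → c i ≠ 0 → r i < r j) :
    ∃ α : ℝ, 0 < α ∧ ∑ i, c i * r i ^ α = 0 := by
  have hcont : Continuous fun α : ℝ ↦ ∑ i, c i * r i ^ α :=
    continuous_iff_continuousAt.2 fun α ↦ (hasDerivAt_sum_mul_rpow hr α).continuousAt
  exact isPreconnected_Ioi.intermediate_value₂_eventually₂ (l₁ := 𝓝[>] 0) inf_le_right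
    (le_principal_iff.2 (Ioi_mem_atTop 0)) hcont.continuousOn continuousOn_const
    ((eventually_sum_mul_rpow_neg hr hsum hlog).mono fun _ ↦ le_of_lt)
    ((eventually_sum_mul_rpow_pos hr hj hlt).mono fun _ ↦ le_of_lt)

end ExponentialSum

section Labelling

open Function

lemma exists_injective_prime (ι : Type*) [Countable ι] :
    ∃ p : ι → ℕ, Injective p ∧ ∀ i, (p i).Prime := by
  obtain ⟨e, he⟩ := exists_injective_nat ι
  exact ⟨fun i ↦ Nat.nth Nat.Prime (e i), (Nat.nth_injective Nat.infinite_setOfPred_prime).comp he,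
    fun i ↦ Nat.prime_nth_prime (e i)⟩

lemma gcd_prod_prod {ι : Type*} [DecidableEq ι] {q : ι → ℕ}
    (hq : Pairwise (Nat.Coprime on q)) (s t : Finset ι) :
    Nat.gcd (∏ i ∈ s, q i) (∏ i ∈ t, q i) = ∏ i ∈ s ∩ t, q i := by
  have hcop : Nat.Coprime (∏ i ∈ s \ t, q i) (∏ i ∈ t \ s, q i) :=
    Nat.Coprime.prod_left fun i hi ↦ Nat.Coprime.prod_right fun j hj ↦ hq fun hij ↦
      (Finset.mem_sdiff.1 hj).2 (hij ▸ (Finset.mem_sdiff.1 hi).1)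
  rw [← Finset.prod_inter_mul_prod_sdiff s t, ← Finset.prod_inter_mul_prod_sdiff t s,
    Finset.inter_comm t s, Nat.gcd_mul_left, hcop.gcd_eq_one, mul_one]

lemma gcd_prod_Iic {L : Type*} [SemilatticeInf L] [LocallyFiniteOrderBot L] {q : L → ℕ}
    (hq : Pairwise (Nat.Coprime on q)) (a b : L) :
    Nat.gcd (∏ w ∈ Finset.Iic a, q w) (∏ w ∈ Finset.Iic b, q w) =
      ∏ w ∈ Finset.Iic (a ⊓ b), q w := by
  classical
  rw [gcd_prod_prod hq]
  congr 1
  ext w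
  simp

lemma strictMono_prod_Iic {L : Type*} [PartialOrder L] [LocallyFiniteOrderBot L] {q : L → ℕ}
    (hq : ∀ w, 1 < q w) : StrictMono fun z ↦ ∏ w ∈ Finset.Iic z, q w := by
  classical
  intro a b hab
  have hb : b ∉ Finset.Iic a := by simpa using hab.not_ge
  have hpos : 0 < ∏ w ∈ Finset.Iic a, q w := Finset.prod_pos fun w _ ↦ zero_lt_one.trans (hq w)
  calc
    ∏ w ∈ Finset.Iic a, q w < q b * ∏ w ∈ Finset.Iic a, q w := lt_mul_left hpos (hq b)
    _ = ∏ w ∈ insert b (Finset.Iic a), q w := (Finset.prod_insert hb).symm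
    _ ≤ ∏ w ∈ Finset.Iic b, q w := by
      refine Finset.prod_le_prod_of_subset_of_one_le' ?_ fun w _ _ ↦ (hq w).le
      exact Finset.insert_subset (by simp) (Finset.Iic_subset_Iic.2 hab.le)

lemma le_iff_dvd_of_gcd_eq {L : Type*} [SemilatticeInf L] {f : L → ℕ} (hf : StrictMono f)
    (hgcd : ∀ a b, Nat.gcd (f a) (f b) = f (a ⊓ b)) (a b : L) : a ≤ b ↔ f a ∣ f b := by
  rw [← Nat.gcd_eq_left_iff_dvd, hgcd, ← inf_eq_left]
  refine ⟨congrArg f, fun h ↦ ?_⟩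
  by_contra hne
  exact (hf (inf_le_left.lt_of_ne hne)).ne h

end Labelling

section PowerLCM

variable {L : Type*} [SemilatticeInf L] [Fintype L] [DecidableEq L] [LocallyFiniteOrder L]

theorem exists_pos_det_lcm_rpow_eq_zero {f : L → ℕ} (hpos : ∀ a, 0 < f a) (hmono : StrictMono f)
    (hgcd : ∀ a b, Nat.gcd (f a) (f b) = f (a ⊓ b)) {x y : L} (hyx : y < x)
    (hy : ∀ u, u ⋖ x → y ≤ u) (hmu : 0 < mu ℝ y x)
    (hlog : 0 < ∑ b, mu ℝ b x * Real.log (f b)) :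
    ∃ α : ℝ, 0 < α ∧ (Matrix.of fun a b ↦ (Nat.lcm (f a) (f b) : ℝ) ^ α).det = 0 := by
  have hfpos (a : L) : (0 : ℝ) < f a := Nat.cast_pos.2 (hpos a)
  have hlt (b : L) (hby : b ≠ y) (hb : mu ℝ b x ≠ 0) : (f b : ℝ)⁻¹ < (f y : ℝ)⁻¹ := by
    have hyb : y < b := (le_of_mu_ne_zero hyx.le hy hb).lt_of_ne' hby
    exact inv_strictAnti₀ (hfpos y) (Nat.cast_lt.2 (hmono hyb))
  obtain ⟨α, hα, hzero⟩ := exists_pos_sum_mul_rpow_eq_zero (fun b ↦ inv_pos.2 (hfpos b))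
    (sum_mu_eq_zero_of_lt ℝ hyx) (by simpa using hlog) hmu hlt
  refine ⟨α, hα, ?_⟩
  rw [det_lcm_rpow hpos hgcd, det_apply_inf_eq_zero (fun b ↦ (f b : ℝ)⁻¹ ^ α) hzero,
    mul_zero, mul_zero]

lemma sum_mu_mul_log_prod_Iic [OrderBot L] {q : L → ℕ} (hq : ∀ w, q w ≠ 0) (x : L) :
    ∑ b, mu ℝ b x * Real.log ((∏ w ∈ Finset.Iic b, q w : ℕ) : ℝ) = Real.log (q x) := by
  rw [← sum_mu_mul_sum_Iic (fun w ↦ Real.log (q w)) x]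
  refine Finset.sum_congr rfl fun b _ ↦ ?_
  rw [Nat.cast_prod, Real.log_prod fun w _ ↦ Nat.cast_ne_zero.2 (hq w)]

variable (L) in
lemma exists_gcd_labelling_sum_mu_mul_log_pos [Nonempty L] :
    ∃ f : L → ℕ, (∀ a, 0 < f a) ∧ StrictMono f ∧ (∀ a b, Nat.gcd (f a) (f b) = f (a ⊓ b)) ∧
      ∀ x, 0 < ∑ b, mu ℝ b x * Real.log (f b) := by
  let : OrderBot L := Fintype.toOrderBot L
  obtain ⟨p, hp_inj, hp⟩ := exists_injective_prime L
  refine ⟨fun z ↦ ∏ w ∈ Finset.Iic z, p w, fun a ↦ Finset.prod_pos fun w _ ↦ (hp w).pos,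
    strictMono_prod_Iic fun w ↦ (hp w).one_lt, gcd_prod_Iic fun v w hvw ↦ ?_, fun x ↦ ?_⟩
  · exact (Nat.coprime_primes (hp v) (hp w)).2 (hp_inj.ne hvw)
  · rw [sum_mu_mul_log_prod_Iic fun w ↦ (hp w).ne_zero]
    exact Real.log_pos (Nat.one_lt_cast.2 (hp x).one_lt)

end PowerLCM

/-- Let `L` be a finite meet semilattice with `x ∈ L` and `y 0, …, y (m-1)` (`m ≥ 2`)
exactly the elements covered by `x`, such that `μ_L (y 0 ⊓ ⋯ ⊓ y (m-1), x) > 0`.  Then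
there is a GCD closed set of positive integers, order-isomorphic to `L` under
divisibility, and a real `α₀ > 0` such that its power LCM matrix
`[lcm (f a) (f b) ^ α₀]` is singular. -/
theorem stmt_12 {L : Type*} [SemilatticeInf L] [Fintype L] [DecidableEq L]
    [LocallyFiniteOrder L] (x : L) (m : ℕ) (hm : 2 ≤ m) (y : Fin m → L)
    (hyinj : Function.Injective y) (hcov : ∀ w, w ⋖ x ↔ ∃ i, y i = w)
    (hmu : 0 < mu ℤ (Finset.univ.inf'
      (@Finset.univ_nonempty (Fin m) _ (Fin.pos_iff_nonempty.mp (by omega))) y) x) :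
    ∃ (f : L → ℕ) (α₀ : ℝ),
      (∀ a, 0 < f a) ∧ Function.Injective f ∧
      (∀ a b, a ≤ b ↔ f a ∣ f b) ∧
      (∀ a b, ∃ c, f c = Nat.gcd (f a) (f b)) ∧
      0 < α₀ ∧
      (Matrix.of fun a b => (Nat.lcm (f a) (f b) : ℝ) ^ α₀).det = 0 := by
  have : Nonempty L := ⟨x⟩
  have : NeZero m := ⟨by omega⟩
  obtain ⟨f, hpos, hmono, hgcd, hlog⟩ := exists_gcd_labelling_sum_mu_mul_log_pos L
  have hdvd : ∀ a b, a ≤ b ↔ f a ∣ f b := le_iff_dvd_of_gcd_eq hmono hgcd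
  have hinj : Function.Injective f := fun a b hab ↦
    le_antisymm ((hdvd a b).2 hab.dvd) ((hdvd b a).2 hab.symm.dvd)
  have hinf_le (u : L) (hu : u ⋖ x) : Finset.univ.inf' Finset.univ_nonempty y ≤ u := by
    obtain ⟨i, rfl⟩ := (hcov u).1 hu
    exact Finset.inf'_le y (Finset.mem_univ i)
  have hcov_zero : y 0 ⋖ x := (hcov (y 0)).2 ⟨0, rfl⟩
  have hmu_real : 0 < mu ℝ (Finset.univ.inf' Finset.univ_nonempty y) x := by
    rw [← intCast_mu]
    exact Int.cast_pos.2 hmu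
  obtain ⟨α₀, hα₀, hdet⟩ := exists_pos_det_lcm_rpow_eq_zero hpos hmono hgcd
    ((hinf_le _ hcov_zero).trans_lt hcov_zero.lt) hinf_le hmu_real (hlog x)
  exact ⟨f, α₀, hpos, hinj, hdvd, fun a b ↦ ⟨a ⊓ b, (hgcd a b).symm⟩, hα₀, hdet⟩
end

section
/- Let (L, ⪯) be a finite meet semilattice with n elements. The following are equivalent: (1) for every real α > 0 and every GCD closed set S = {x_1, …, x_n} of positive integers with (S, |) order-isomorphic to (L, ⪯), the power LCM matrix with ij-entry lcm(x_i, x_j)^α is nonsingular; (2) every element of L covers at most one element of L; (3) for all z_i, z_j ∈ L, μ_L(z_i, z_j) > 0 implies z_i = z_j. -/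
open IncidenceAlgebra

open Finset

/-!
Writing `f` for the integer labels, the power LCM matrix is congruent, through the diagonal matrix
of the `(f a) ^ α`, to the meet matrix of `g = f ^ (-α)`, whose determinant is the product of the
values `∑ y ≤ x, μ(y, x) * g y` of the Möbius transform of `g`. Where `x` has a single lower cover
`y`, this value is `g x - g y`, which is nonzero.

Let `x` be minimal among the elements with two lower covers `y₁` and `y₂`, and let `z = y₁ ⊓ y₂`.
For `t < x` outside `Iic y₁` the transform is the difference of `g` at `t` and at its lower cover.
If these differences are nonpositive, inclusion–exclusion over `Iic y₁` and `Iic y₂` bounds the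
transform at `x` below by `g x + g z - g y₁ - g y₂`. For `g` the indicator of `z` this says
`1 ≤ μ(z, x)`. For `g = 1 / f` it says that the transform at `x` is positive, because `f y₁` and
`f y₂` are at least `2 * f z`. On the other hand `∑ y < x, μ(y, x) = -1`, so the transform of
`f ^ (-α)` at `x` is negative once `α` is small and `f x` is large. Continuity in `α` then
produces a zero with `0 < α ≤ 1`.
-/

/-- The local form of the `∧`-tree condition: `x` has at most one lower cover. -/
def CoversAtMostOne {P : Type*} [Preorder P] (x : P) : Prop :=
  ∀ y₁ y₂, y₁ ⋖ x → y₂ ⋖ x → y₁ = y₂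

section LowerCovers

variable {P : Type*}

theorem CoversAtMostOne.Iio_eq_Iic [PartialOrder P] [OrderBot P] [LocallyFiniteOrder P]
    {x y : P} (hx : CoversAtMostOne x) (hyx : y ⋖ x) :
    Iio x = Iic y := by
  ext t
  rw [mem_Iio, mem_Iic]
  refine ⟨fun htx => ?_, fun hty => hty.trans_lt hyx.lt⟩
  obtain ⟨z, htz, hzx⟩ := exists_le_covBy_of_lt htx
  exact hx z y hzx hyx ▸ htz

theorem exists_inf_lt_of_not_coversAtMostOne [SemilatticeInf P] {x : P}
    (hx : ¬ CoversAtMostOne x) :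
    ∃ y₁ y₂, y₁ < x ∧ y₂ < x ∧ y₁ ⊓ y₂ < y₁ ∧ y₁ ⊓ y₂ < y₂ := by
  simp only [CoversAtMostOne, not_forall] at hx
  obtain ⟨y₁, y₂, hy₁, hy₂, hne⟩ := hx
  have not_le₁ : ¬ y₁ ≤ y₂ := fun hle => hy₁.2 (hle.lt_of_ne hne) hy₂.lt
  have not_le₂ : ¬ y₂ ≤ y₁ := fun hle => hy₂.2 (hle.lt_of_ne' hne) hy₁.lt
  exact ⟨y₁, y₂, hy₁.lt, hy₂.lt, inf_lt_left.2 not_le₁, inf_lt_right.2 not_le₂⟩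

theorem sum_Iio_add_sum_Iic_inf_le [SemilatticeInf P] [LocallyFiniteOrderBot P]
    {M : Type*} [AddCommMonoid M] [PartialOrder M] [IsOrderedAddMonoid M]
    {f : P → M} {x y₁ y₂ : P} (hy₁ : y₁ < x) (hy₂ : y₂ < x)
    (hf : ∀ t < x, ¬ t ≤ y₁ → f t ≤ 0) :
    ∑ t ∈ Iio x, f t + ∑ t ∈ Iic (y₁ ⊓ y₂), f t ≤ ∑ t ∈ Iic y₁, f t + ∑ t ∈ Iic y₂, f t := by
  classical
  have hunion : Iic y₁ ∪ Iic y₂ ⊆ Iio x :=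
    union_subset (fun t ht => mem_Iio.2 ((mem_Iic.1 ht).trans_lt hy₁))
      fun t ht => mem_Iio.2 ((mem_Iic.1 ht).trans_lt hy₂)
  have hinter : Iic y₁ ∩ Iic y₂ = Iic (y₁ ⊓ y₂) := by ext; simp
  rw [← sum_union_inter (s₁ := Iic y₁), hinter]
  refine add_le_add (sum_le_sum_of_subset_of_nonpos' hunion fun t htx ht => ?_) le_rfl
  exact hf t (mem_Iio.1 htx) fun hty => ht (mem_union_left _ (mem_Iic.2 hty))

end LowerCovers

section MoebiusTransform

theorem single_one_apply_le_of_ne {P R : Type*} [DecidableEq P] [Semiring R] [PartialOrder R]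
    [IsOrderedRing R] {z t : P} (htz : t ≠ z) (s : P) :
    (Pi.single z 1 : P → R) t ≤ (Pi.single z 1 : P → R) s := by
  have hnonneg : (0 : P → R) ≤ Pi.single z 1 := Pi.single_nonneg.2 zero_le_one
  rw [Pi.single_eq_of_ne htz]
  exact hnonneg s

variable {P : Type*} {R : Type*} [Ring R]

/-- The Möbius transform of `g`: the function whose sum over each lower set `Iic x` is `g x`.
Its values are the diagonal entries in the factorization of the meet matrix of `g`. -/
def moebiusTransform [PartialOrder P] [OrderBot P] [LocallyFiniteOrder P] [DecidableEq P]
    (g : P → R) (x : P) : R :=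
  ∑ y ∈ Iic x, mu R y x * g y

section PartialOrder

variable [PartialOrder P] [OrderBot P] [LocallyFiniteOrder P] [DecidableEq P]

theorem sum_Iic_moebiusTransform (g : P → R) (x : P) :
    ∑ t ∈ Iic x, moebiusTransform g t = g x := by
  calc ∑ t ∈ Iic x, moebiusTransform g t
      = ∑ y ∈ Iic x, ∑ t ∈ Icc y x, mu R y t * g y :=
        sum_comm' fun t y => by
          simp only [mem_Iic, mem_Icc]
          exact ⟨fun h => ⟨⟨h.2, h.1⟩, h.2.trans h.1⟩, fun h => ⟨h.1.2, h.1.1⟩⟩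
    _ = g x := by simp [← sum_mul, sum_Icc_mu_right]

theorem moebiusTransform_single (z x : P) :
    moebiusTransform (Pi.single z (1 : R)) x = mu R z x := by
  by_cases hzx : z ≤ x
  · simp [moebiusTransform, Pi.single_apply, hzx]
  · simp [moebiusTransform, Pi.single_apply, hzx, apply_eq_zero_of_not_le hzx]

theorem moebiusTransform_add_sum_Iio (g : P → R) (x : P) :
    moebiusTransform g x + ∑ t ∈ Iio x, moebiusTransform g t = g x := by
  rw [add_sum_Iio_eq_sum_Iic, sum_Iic_moebiusTransform]

theorem moebiusTransform_bot (g : P → R) : moebiusTransform g ⊥ = g ⊥ := by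
  simp [moebiusTransform]

theorem moebiusTransform_eq_add_sum_Iio_mu (g : P → R) (x : P) :
    moebiusTransform g x = g x + ∑ y ∈ Iio x, mu R y x * g y := by
  simp [moebiusTransform, ← add_sum_Iio_eq_sum_Iic]

theorem sum_Iio_mu_left {x : P} (hx : x ≠ ⊥) : ∑ y ∈ Iio x, mu R y x = -1 := by
  have hsum : mu R x x + ∑ y ∈ Iio x, mu R y x = 0 := by
    rw [add_sum_Iio_eq_sum_Iic (f := (mu R · x)), ← Icc_bot, sum_Icc_mu_left, if_neg hx.symm]
  rwa [mu_self, add_comm, add_eq_zero_iff_eq_neg] at hsum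

theorem CoversAtMostOne.moebiusTransform_eq_sub {x y : P}
    (hx : CoversAtMostOne x) (hyx : y ⋖ x) (g : P → R) :
    moebiusTransform g x = g x - g y := by
  rw [eq_sub_iff_add_eq, ← sum_Iic_moebiusTransform g y, ← hx.Iio_eq_Iic hyx,
    moebiusTransform_add_sum_Iio]

theorem CoversAtMostOne.moebiusTransform_nonpos [PartialOrder R]
    [IsOrderedAddMonoid R] {x : P} (hx : CoversAtMostOne x) (hbot : x ≠ ⊥) {g : P → R}
    (hg : ∀ y, y ⋖ x → g x ≤ g y) : moebiusTransform g x ≤ 0 := by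
  obtain ⟨y, -, hyx⟩ := exists_le_covBy_of_lt (bot_lt_iff_ne_bot.2 hbot)
  rw [hx.moebiusTransform_eq_sub hyx, sub_nonpos]
  exact hg y hyx

theorem CoversAtMostOne.mu_nonpos [PartialOrder R] [IsOrderedRing R]
    {x z : P} (hx : CoversAtMostOne x) (hzx : z ≠ x) : mu R z x ≤ 0 := by
  rw [← moebiusTransform_single]
  rcases eq_or_ne x ⊥ with rfl | hbot
  · simp [moebiusTransform_bot, hzx.symm]
  · exact hx.moebiusTransform_nonpos hbot fun y _ => single_one_apply_le_of_ne hzx.symm y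

end PartialOrder

section SemilatticeInf

variable [SemilatticeInf P] [OrderBot P] [LocallyFiniteOrder P] [DecidableEq P]
  [PartialOrder R] {x : P}

theorem add_apply_inf_le_moebiusTransform_add [IsOrderedAddMonoid R]
    (hx : ∀ t < x, CoversAtMostOne t) {y₁ y₂ : P} (hy₁ : y₁ < x) (hy₂ : y₂ < x) {g : P → R}
    (hg : ∀ t < x, ¬ t ≤ y₁ → ∀ s, s ⋖ t → g t ≤ g s) :
    g x + g (y₁ ⊓ y₂) ≤ moebiusTransform g x + (g y₁ + g y₂) := by
  have hnonpos : ∀ t < x, ¬ t ≤ y₁ → moebiusTransform g t ≤ 0 := fun t htx hty =>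
    (hx t htx).moebiusTransform_nonpos (fun hbot => hty (hbot ▸ bot_le)) (hg t htx hty)
  have hsum := sum_Iio_add_sum_Iic_inf_le hy₁ hy₂ hnonpos
  simp only [sum_Iic_moebiusTransform] at hsum
  rw [← moebiusTransform_add_sum_Iio g x, add_assoc]
  gcongr

theorem exists_lt_one_le_mu_of_minimal [IsOrderedRing R]
    (hx : Minimal (fun t : P => ¬ CoversAtMostOne t) x) : ∃ z < x, 1 ≤ mu R z x := by
  obtain ⟨y₁, y₂, hy₁, hy₂, hlt₁, hlt₂⟩ := exists_inf_lt_of_not_coversAtMostOne hx.prop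
  have hzx := hlt₁.trans hy₁
  refine ⟨y₁ ⊓ y₂, hzx, ?_⟩
  have h := add_apply_inf_le_moebiusTransform_add (g := Pi.single (y₁ ⊓ y₂) (1 : R))
    (fun t ht => not_not.1 (hx.not_prop_of_lt ht)) hy₁ hy₂ fun t _ hty s _ =>
      single_one_apply_le_of_ne (by rintro rfl; exact hty inf_le_left) s
  rwa [moebiusTransform_single, Pi.single_eq_same, Pi.single_eq_of_ne hlt₁.ne',
    Pi.single_eq_of_ne hlt₂.ne', Pi.single_eq_of_ne hzx.ne', zero_add, add_zero, add_zero] at h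

end SemilatticeInf

end MoebiusTransform

section Determinant

variable {P : Type*} [Fintype P] [DecidableEq P] {R : Type*} [CommRing R]

theorem det_zeta [PartialOrder P] [DecidableLE P] :
    (Matrix.of fun a b : P => zeta R a b).det = 1 := by
  let toExt : P ≃ LinearExtension P := Equiv.refl P
  let : Fintype (LinearExtension P) := Fintype.ofEquiv P toExt
  rw [← Matrix.det_reindex_self toExt, Matrix.det_of_isUpperTriangular]
  · simp
  · intro a b hba
    refine zeta_apply _ _ |>.trans (if_neg fun hab => hba.not_ge ?_)
    exact (toLinearExtension (α := P)).monotone hab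

theorem det_apply_inf [SemilatticeInf P] [OrderBot P] [LocallyFiniteOrder P] (g : P → R) :
    (Matrix.of fun a b : P => g (a ⊓ b)).det = ∏ t, moebiusTransform g t := by
  classical
  let Z : Matrix P P R := Matrix.of fun t a => zeta R t a
  have hfactor : Matrix.of (fun a b : P => g (a ⊓ b)) =
      Z.transpose * Matrix.diagonal (moebiusTransform g) * Z := by
    ext a b
    rw [Matrix.mul_apply, Matrix.of_apply, ← sum_Iic_moebiusTransform g, ← filter_ge_eq_Iic,
      sum_filter]
    refine sum_congr rfl fun t _ => ?_
    by_cases hta : t ≤ a <;> simp [Z, Matrix.mul_diagonal, hta]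
  rw [hfactor, Matrix.det_mul, Matrix.det_mul, Matrix.det_transpose, Matrix.det_diagonal, det_zeta,
    one_mul, mul_one]

theorem det_mul_apply_inf_mul [SemilatticeInf P] [OrderBot P] [LocallyFiniteOrder P]
    (u g : P → R) :
    (Matrix.of fun a b : P => u a * (u b * g (a ⊓ b))).det =
      (∏ a, u a) ^ 2 * ∏ t, moebiusTransform g t := by
  have hcol := Matrix.det_mul_column u (Matrix.of fun a b => u b * g (a ⊓ b))
  have hrow := Matrix.det_mul_row u (Matrix.of fun a b => g (a ⊓ b))
  simp only [Matrix.of_apply] at hcol hrow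
  rw [hcol, hrow, det_apply_inf, sq, mul_assoc]

end Determinant

section GCDEmbedding

variable {P : Type*} [SemilatticeInf P]

/-- The ways of writing `P` as a GCD closed set of positive integers ordered by divisibility,
encoded as the injective maps into the positive integers that turn meets into GCDs. -/
structure IsGCDEmbedding (f : P → ℕ) : Prop where
  pos : ∀ a, 0 < f a
  injective : Function.Injective f
  map_inf : ∀ a b, f (a ⊓ b) = Nat.gcd (f a) (f b)

theorem isGCDEmbedding_of_le_iff_dvd {f : P → ℕ} (hpos : ∀ a, 0 < f a)
    (hdvd : ∀ a b, a ≤ b ↔ f a ∣ f b) (hgcd : ∀ a b, ∃ c, f c = Nat.gcd (f a) (f b)) :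
    IsGCDEmbedding f where
  pos := hpos
  injective a b hab := le_antisymm ((hdvd a b).2 hab.dvd) ((hdvd b a).2 hab.symm.dvd)
  map_inf a b := by
    obtain ⟨c, hc⟩ := hgcd a b
    have hc_le : c ≤ a ⊓ b := le_inf ((hdvd c a).2 (hc ▸ Nat.gcd_dvd_left _ _))
      ((hdvd c b).2 (hc ▸ Nat.gcd_dvd_right _ _))
    exact Nat.dvd_antisymm
      (Nat.dvd_gcd ((hdvd _ a).1 inf_le_left) ((hdvd _ b).1 inf_le_right))
      (hc ▸ (hdvd c _).1 hc_le)

/-- The product of the labels `p v` over all `v ≤ a`. Pairwise coprime labels larger than `1` turn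
it into a GCD embedding. -/
def labelProd [LocallyFiniteOrderBot P] (p : P → ℕ) (a : P) : ℕ :=
  ∏ v ∈ Iic a, p v

theorem isGCDEmbedding_labelProd [LocallyFiniteOrderBot P] {p : P → ℕ} (hp : ∀ v, 1 < p v)
    (hcop : Pairwise (Function.onFun Nat.Coprime p)) : IsGCDEmbedding (labelProd p) where
  pos a := prod_pos fun v _ => zero_lt_one.trans (hp v)
  injective := by
    have le_of_eq : ∀ a b, labelProd p a = labelProd p b → a ≤ b := by
      intro a b hab
      by_contra hle
      have hdvd : p a ∣ labelProd p b := hab ▸ dvd_prod_of_mem p (mem_Iic.2 le_rfl)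
      have hcop_prod : Nat.Coprime (p a) (labelProd p b) :=
        Nat.Coprime.prod_right fun v hv => hcop fun hav => hle (hav ▸ mem_Iic.1 hv)
      exact (hp a).ne' (hcop_prod.eq_one_of_dvd hdvd)
    exact fun a b hab => le_antisymm (le_of_eq a b hab) (le_of_eq b a hab.symm)
  map_inf a b := by
    classical
    have hinter : Iic (a ⊓ b) = Iic a ∩ Iic b := by ext; simp
    have hsdiff : Nat.Coprime (∏ v ∈ Iic a \ Iic b, p v) (∏ v ∈ Iic b \ Iic a, p v) :=
      Nat.Coprime.prod_left fun v hv => Nat.Coprime.prod_right fun w hw => hcop <| by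
        rintro rfl
        exact (mem_sdiff.1 hv).2 (mem_sdiff.1 hw).1
    rw [labelProd, labelProd, labelProd, hinter, ← prod_inter_mul_prod_sdiff (Iic a) (Iic b),
      ← prod_inter_mul_prod_sdiff (Iic b) (Iic a), inter_comm (Iic b), Nat.gcd_mul_left,
      hsdiff.gcd_eq_one, mul_one]

theorem exists_isGCDEmbedding [LocallyFiniteOrderBot P] [Countable P] :
    ∃ f : P → ℕ, IsGCDEmbedding f := by
  obtain ⟨e, he⟩ := exists_injective_nat P
  have hprime : ∀ n, (Nat.nth Nat.Prime n).Prime := Nat.prime_nth_prime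
  refine ⟨_, isGCDEmbedding_labelProd (p := Nat.nth Nat.Prime ∘ e)
    (fun v => (hprime (e v)).one_lt) fun v w hvw => ?_⟩
  exact (Nat.coprime_primes (hprime _) (hprime _)).2 fun h =>
    hvw (he (Nat.nth_injective Nat.infinite_setOfPred_prime h))

namespace IsGCDEmbedding

variable {f : P → ℕ}

theorem le_iff_dvd (hf : IsGCDEmbedding f) (a b : P) : a ≤ b ↔ f a ∣ f b := by
  rw [← Nat.gcd_eq_left_iff_dvd, ← hf.map_inf, hf.injective.eq_iff, inf_eq_left]

theorem two_mul_le_of_lt (hf : IsGCDEmbedding f) {a b : P} (hab : a < b) : 2 * f a ≤ f b := by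
  obtain ⟨k, hk⟩ := (hf.le_iff_dvd a b).1 hab.le
  have hk0 : k ≠ 0 := by
    rintro rfl
    exact (hf.pos b).ne' (by rw [hk, mul_zero])
  have hk1 : k ≠ 1 := by
    rintro rfl
    exact hab.ne' (hf.injective (by rw [hk, mul_one]))
  rw [hk, mul_comm]
  exact Nat.mul_le_mul_left _ (by omega)

theorem mul_ite [DecidableLE P] (hf : IsGCDEmbedding f) (x : P) {r : ℕ} (hr : 1 < r)
    (hcop : ∀ a, r.Coprime (f a)) : IsGCDEmbedding fun a => f a * if x ≤ a then r else 1 where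
  pos a := Nat.mul_pos (hf.pos a) (by split_ifs <;> omega)
  injective a b hab := by
    have not_mul_eq : ∀ c d, f c * r ≠ f d := fun c d h =>
      hr.ne' ((hcop d).eq_one_of_dvd (h ▸ dvd_mul_left r (f c)))
    dsimp only at hab
    split_ifs at hab
    · exact hf.injective (Nat.eq_of_mul_eq_mul_right (by omega) hab)
    · exact absurd (hab.trans (mul_one _)) (not_mul_eq a b)
    · exact absurd (hab.symm.trans (mul_one _)) (not_mul_eq b a)
    · exact hf.injective (by simpa only [mul_one] using hab)
  map_inf a b := by
    by_cases ha : x ≤ a <;> by_cases hb : x ≤ b <;>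
      simp [ha, hb, hf.map_inf, Nat.gcd_mul_right, (hcop a).gcd_mul_right_cancel_right,
        (hcop b).gcd_mul_right_cancel]

theorem exists_eq_of_not_le_and_le [Finite P] (hf : IsGCDEmbedding f) (x : P) (N : ℕ) :
    ∃ g : P → ℕ, IsGCDEmbedding g ∧ (∀ a, ¬ x ≤ a → g a = f a) ∧ N ≤ g x := by
  classical
  cases nonempty_fintype P
  let r := (N + 1) * ∏ a, f a + 1
  have hprod : 0 < ∏ a, f a := prod_pos fun a _ => hf.pos a
  have hN : N < r := by
    have := Nat.le_mul_of_pos_right (N + 1) hprod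
    omega
  have hcop : ∀ a, r.Coprime (f a) := fun a => by
    have hdvd : f a ∣ (N + 1) * ∏ a, f a := (dvd_prod_of_mem f (mem_univ a)).mul_left _
    exact ((Nat.coprime_self_add_left).2 (Nat.coprime_one_left _)).coprime_dvd_right hdvd
  refine ⟨_, hf.mul_ite x (r := r) ?_ hcop, fun a ha => by simp [ha], ?_⟩
  · have : 0 < (N + 1) * ∏ a, f a := by positivity
    omega
  · rw [if_pos le_rfl]
    exact hN.le.trans (Nat.le_mul_of_pos_left r (hf.pos x))

end IsGCDEmbedding

end GCDEmbedding

section PowerLCM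

variable {P : Type*} [SemilatticeInf P] {f : P → ℕ}

theorem IsGCDEmbedding.lcm_rpow (hf : IsGCDEmbedding f) (α : ℝ) (a b : P) :
    (Nat.lcm (f a) (f b) : ℝ) ^ α =
      (f a : ℝ) ^ α * ((f b : ℝ) ^ α * (f (a ⊓ b) : ℝ) ^ (-α)) := by
  have hpos : (0 : ℝ) < f (a ⊓ b) := Nat.cast_pos.2 (hf.pos _)
  have hmul : (f (a ⊓ b) : ℝ) * Nat.lcm (f a) (f b) = f a * f b := by
    rw [hf.map_inf]
    exact_mod_cast Nat.gcd_mul_lcm _ _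
  rw [← mul_assoc, ← Real.mul_rpow (Nat.cast_nonneg _) (Nat.cast_nonneg _), ← hmul,
    Real.mul_rpow hpos.le (Nat.cast_nonneg _), Real.rpow_neg hpos.le]
  field_simp

variable [OrderBot P] [LocallyFiniteOrder P] [DecidableEq P]

theorem IsGCDEmbedding.det_lcm_rpow_ne_zero_iff [Fintype P] (hf : IsGCDEmbedding f) (α : ℝ) :
    (Matrix.of fun a b => (Nat.lcm (f a) (f b) : ℝ) ^ α).det ≠ 0 ↔
      ∀ t, moebiusTransform (fun a => (f a : ℝ) ^ (-α)) t ≠ 0 := by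
  have hprod : ∏ a, (f a : ℝ) ^ α ≠ 0 := prod_ne_zero_iff.2 fun a _ =>
    (Real.rpow_pos_of_pos (Nat.cast_pos.2 (hf.pos a)) α).ne'
  simp_rw [hf.lcm_rpow α]
  rw [det_mul_apply_inf_mul (fun a => (f a : ℝ) ^ α) fun a => (f a : ℝ) ^ (-α),
    mul_ne_zero_iff_left (pow_ne_zero 2 hprod), prod_ne_zero_iff]
  simp

theorem CoversAtMostOne.moebiusTransform_rpow_ne_zero {x : P} (hx : CoversAtMostOne x)
    (hf : IsGCDEmbedding f) {β : ℝ} (hβ : β ≠ 0) :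
    moebiusTransform (fun a => (f a : ℝ) ^ β) x ≠ 0 := by
  rcases eq_or_ne x ⊥ with rfl | hbot
  · rw [moebiusTransform_bot]
    exact (Real.rpow_pos_of_pos (Nat.cast_pos.2 (hf.pos ⊥)) β).ne'
  · obtain ⟨y, -, hyx⟩ := exists_le_covBy_of_lt (bot_lt_iff_ne_bot.2 hbot)
    rw [hx.moebiusTransform_eq_sub hyx, sub_ne_zero,
      (Real.rpow_left_inj (Nat.cast_nonneg _) (Nat.cast_nonneg _) hβ).ne, Nat.cast_injective.ne_iff]
    exact hf.injective.ne hyx.ne'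

theorem IsGCDEmbedding.moebiusTransform_inv_pos {K : Type*} [Field K] [LinearOrder K]
    [IsStrictOrderedRing K] (hf : IsGCDEmbedding f) {x : P}
    (hx : Minimal (fun t : P => ¬ CoversAtMostOne t) x) :
    0 < moebiusTransform (fun a => (f a : K)⁻¹) x := by
  obtain ⟨y₁, y₂, hy₁, hy₂, hlt₁, hlt₂⟩ := exists_inf_lt_of_not_coversAtMostOne hx.prop
  have hpos : ∀ a, (0 : K) < (f a : K)⁻¹ := fun a => inv_pos.2 (Nat.cast_pos.2 (hf.pos a))
  have inv_halves : ∀ a b, a < b → (f b : K)⁻¹ ≤ (f a : K)⁻¹ / 2 := fun a b hab => by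
    rw [div_eq_inv_mul, ← mul_inv]
    refine inv_anti₀ (mul_pos two_pos (inv_pos.1 (hpos a))) ?_
    exact_mod_cast hf.two_mul_le_of_lt hab
  have hle := add_apply_inf_le_moebiusTransform_add (g := fun a => (f a : K)⁻¹)
    (fun t ht => not_not.1 (hx.not_prop_of_lt ht)) hy₁ hy₂ fun t _ _ s hst =>
      (inv_halves s t hst.lt).trans (half_le_self (hpos s).le)
  linarith [hpos x, inv_halves _ _ hlt₁, inv_halves _ _ hlt₂]

theorem continuous_natCast_rpow_neg {n : ℕ} (hn : 0 < n) :
    Continuous fun α : ℝ => (n : ℝ) ^ (-α) :=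
  (Real.continuous_const_rpow (Nat.cast_ne_zero.2 hn.ne')).comp continuous_neg

theorem exists_sum_Iio_mu_mul_rpow_neg {x : P} (hx : x ≠ ⊥) (hf : ∀ a, 0 < f a) :
    ∃ α ∈ Set.Ioo (0 : ℝ) 1, ∑ a ∈ Iio x, mu ℝ a x * (f a : ℝ) ^ (-α) < 0 := by
  have hcont : Continuous fun α : ℝ => ∑ a ∈ Iio x, mu ℝ a x * (f a : ℝ) ^ (-α) :=
    continuous_finsetSum _ fun a _ => (continuous_natCast_rpow_neg (hf a)).const_mul _
  have hneg_zero : ∑ a ∈ Iio x, mu ℝ a x * (f a : ℝ) ^ (-0 : ℝ) < 0 := by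
    simp [sum_Iio_mu_left hx]
  have hneg := (hcont.tendsto 0).eventually_lt_const hneg_zero
  have hIoo : ∀ᶠ α : ℝ in nhdsWithin 0 (Set.Ioi 0), α ∈ Set.Ioo (0 : ℝ) 1 :=
    Ioo_mem_nhdsGT one_pos
  exact (hIoo.and (hneg.filter_mono nhdsWithin_le_nhds)).exists

theorem exists_isGCDEmbedding_moebiusTransform_neg [Finite P] {x : P} (hx : x ≠ ⊥) :
    ∃ f : P → ℕ, IsGCDEmbedding f ∧
      ∃ α ∈ Set.Ioo (0 : ℝ) 1, moebiusTransform (fun a => (f a : ℝ) ^ (-α)) x < 0 := by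
  obtain ⟨f₀, hf₀⟩ := exists_isGCDEmbedding (P := P)
  obtain ⟨α, hα, hsum⟩ := exists_sum_Iio_mu_mul_rpow_neg hx hf₀.pos
  have htendsto : Filter.Tendsto (fun n : ℕ => (n : ℝ) ^ (-α)) Filter.atTop (nhds 0) :=
    (tendsto_rpow_neg_atTop hα.1).comp tendsto_natCast_atTop_atTop
  obtain ⟨N, hN⟩ :=
    Filter.eventually_atTop.1 (htendsto.eventually_lt_const (neg_pos.2 hsum))
  obtain ⟨f, hf, hf_eq, hNf⟩ := hf₀.exists_eq_of_not_le_and_le x N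
  have hsum_eq : ∑ a ∈ Iio x, mu ℝ a x * (f a : ℝ) ^ (-α) =
      ∑ a ∈ Iio x, mu ℝ a x * (f₀ a : ℝ) ^ (-α) :=
    sum_congr rfl fun a ha => by rw [hf_eq a (mem_Iio.1 ha).not_ge]
  refine ⟨f, hf, α, hα, ?_⟩
  rw [moebiusTransform_eq_add_sum_Iio_mu, hsum_eq]
  linarith [hN _ hNf]

theorem exists_isGCDEmbedding_moebiusTransform_eq_zero [Finite P] {x : P}
    (hx : Minimal (fun t : P => ¬ CoversAtMostOne t) x) :
    ∃ f : P → ℕ, IsGCDEmbedding f ∧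
      ∃ α : ℝ, 0 < α ∧ moebiusTransform (fun a => (f a : ℝ) ^ (-α)) x = 0 := by
  have hbot : x ≠ ⊥ := by
    rintro rfl
    exact hx.prop fun y _ hy => absurd hy.lt not_lt_bot
  obtain ⟨f, hf, α₀, ⟨hα₀, hα₀_lt⟩, hneg⟩ := exists_isGCDEmbedding_moebiusTransform_neg hbot
  have hcont : Continuous fun α : ℝ => moebiusTransform (fun a => (f a : ℝ) ^ (-α)) x :=
    continuous_finsetSum _ fun a _ => (continuous_natCast_rpow_neg (hf.pos a)).const_mul _
  have hpos : 0 < moebiusTransform (fun a => (f a : ℝ) ^ (-1 : ℝ)) x := by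
    simpa only [Real.rpow_neg_one] using hf.moebiusTransform_inv_pos (K := ℝ) hx
  obtain ⟨α, hα, hzero⟩ :=
    intermediate_value_Icc hα₀_lt.le hcont.continuousOn ⟨hneg.le, hpos.le⟩
  exact ⟨f, hf, α, hα₀.trans_le hα.1, hzero⟩

end PowerLCM

/-- For a finite meet semilattice `L`, the following are equivalent:
(1) for every real `α > 0` and every GCD closed set of positive integers
order-isomorphic to `(L, ≤)` under divisibility, the power LCM matrix
`[lcm (f a) (f b) ^ α]` is nonsingular;
(2) every element of `L` covers at most one element of `L`;
(3) `μ_L (z i, z j) > 0` implies `z i = z j`. -/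
theorem stmt_13 {L : Type*} [SemilatticeInf L] [Fintype L] [DecidableEq L]
    [LocallyFiniteOrder L] :
    List.TFAE
      [∀ α : ℝ, 0 < α → ∀ f : L → ℕ, (∀ a, 0 < f a) → Function.Injective f →
          (∀ a b, a ≤ b ↔ f a ∣ f b) → (∀ a b, ∃ c, f c = Nat.gcd (f a) (f b)) →
          (Matrix.of fun a b => (Nat.lcm (f a) (f b) : ℝ) ^ α).det ≠ 0,
        ∀ x y₁ y₂ : L, y₁ ⋖ x → y₂ ⋖ x → y₁ = y₂,
        ∀ zi zj : L, 0 < mu ℤ zi zj → zi = zj] := by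
  rcases isEmpty_or_nonempty L with _ | _
  · simp
  let : OrderBot L := Fintype.toOrderBot L
  have exists_minimal (h : ¬ ∀ x : L, CoversAtMostOne x) :
      ∃ x, Minimal (fun t : L => ¬ CoversAtMostOne t) x :=
    exists_minimal_of_wellFoundedLT _ (not_forall.1 h)
  tfae_have 1 → 2 := by
    intro hdet
    by_contra htree
    obtain ⟨x, hx⟩ := exists_minimal htree
    obtain ⟨f, hf, α, hα, hzero⟩ := exists_isGCDEmbedding_moebiusTransform_eq_zero hx
    exact (hf.det_lcm_rpow_ne_zero_iff α).1 (hdet α hα f hf.pos hf.injective hf.le_iff_dvd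
      fun a b => ⟨a ⊓ b, hf.map_inf a b⟩) x hzero
  tfae_have 2 → 1 := fun htree α hα f hpos _ hdvd hgcd =>
    have hf := isGCDEmbedding_of_le_iff_dvd hpos hdvd hgcd
    (hf.det_lcm_rpow_ne_zero_iff α).2 fun t =>
      CoversAtMostOne.moebiusTransform_rpow_ne_zero (htree t) hf (neg_ne_zero.2 hα.ne')
  tfae_have 2 → 3 := fun htree z x hpos =>
    by_contra fun hne => hpos.not_ge (CoversAtMostOne.mu_nonpos (htree x) hne)
  tfae_have 3 → 2 := by
    intro hmu
    by_contra htree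
    obtain ⟨x, hx⟩ := exists_minimal htree
    obtain ⟨z, hzx, hone⟩ := exists_lt_one_le_mu_of_minimal (R := ℤ) hx
    exact hzx.ne (hmu z x (zero_lt_one.trans_le hone))
  tfae_finish
end

section
/- Let (L, ⪯) be a finite meet semilattice. Then every element of L covers at most one element of L if and only if for all z_i, z_j ∈ L, μ_L(z_i, z_j) > 0 implies z_i = z_j. -/
open IncidenceAlgebra

/-!
If `b` covers only `y`, then `[a, b) = [a, y]` for every `a`, so the defining recursion
gives `μ(a, b) = -∑_{a ≤ x ≤ y} μ(a, x)`, which is `-1` if `a = y` and `0` otherwise.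

Conversely, for `z < x` the values `μ(w, x)` with `w ∈ [z, x)` add up to `-1`. If `x` covers two
elements above `z`, these already contribute `-2`, so some other summand is positive.
-/

open Finset

theorem lt_iff_le_of_unique_covBy {α : Type*} [Preorder α] [IsStronglyCoatomic α] {b y : α}
    (hyb : y ⋖ b) (hunique : ∀ y', y' ⋖ b → y' = y) {c : α} : c < b ↔ c ≤ y := by
  refine ⟨fun hcb ↦ ?_, fun hcy ↦ hcy.trans_lt hyb.lt⟩
  obtain ⟨y', hcy', hy'b⟩ := exists_le_covBy_of_lt hcb
  exact hunique y' hy'b ▸ hcy'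

section Mu

variable {α R : Type*} [PartialOrder α] [LocallyFiniteOrder α] [DecidableEq α]

theorem mu_eq_ite_of_unique_covBy [AddCommGroup R] [One R] {a b y : α} (hab : a ≠ b)
    (hyb : y ⋖ b) (hunique : ∀ y', y' ⋖ b → y' = y) :
    mu R a b = if a = y then -1 else 0 := by
  have hIco : Ico a b = Icc a y := by
    ext c
    simp only [mem_Ico, mem_Icc, lt_iff_le_of_unique_covBy hyb hunique]
  rw [mu_eq_neg_sum_Ico_of_ne hab, hIco, sum_Icc_mu_right, apply_ite Neg.neg, neg_zero]

theorem mu_nonpos_of_covBy_subsingleton [AddCommGroup R] [One R] [PartialOrder R]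
    [IsOrderedAddMonoid R] [ZeroLEOneClass R] {a b : α}
    (hb : ∀ y₁ y₂, y₁ ⋖ b → y₂ ⋖ b → y₁ = y₂) (hab : a ≠ b) : mu R a b ≤ 0 := by
  by_cases hle : a ≤ b
  · obtain ⟨y, -, hyb⟩ := exists_le_covBy_of_lt (hle.lt_of_ne hab)
    rw [mu_eq_ite_of_unique_covBy hab hyb fun y' hy'b ↦ hb y' y hy'b hyb]
    split_ifs
    · exact neg_nonpos.2 zero_le_one
    · exact le_rfl
  · exact (apply_eq_zero_of_not_le hle _).le

theorem mu_eq_neg_one_of_covBy [AddCommGroup R] [One R] {a b : α} (hab : a ⋖ b) :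
    mu R a b = -1 := by
  have hIco : Ico a b = {a} := by
    rw [← coe_inj, coe_Ico, hab.Ico_eq, coe_singleton]
  rw [mu_eq_neg_sum_Ico_of_ne hab.ne, hIco, sum_singleton, mu_self]

theorem sum_Ico_mu_left_of_lt [Ring R] {a b : α} (hab : a < b) :
    ∑ x ∈ Ico a b, mu R x b = -1 := by
  have hIcc : ∑ x ∈ Icc a b, mu R x b = 0 := by rw [sum_Icc_mu_left, if_neg hab.ne]
  rw [Icc_eq_cons_Ico hab.le, sum_cons, mu_self] at hIcc
  exact (neg_eq_of_add_eq_zero_right hIcc).symm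

theorem exists_mu_pos_of_covBy_of_covBy [Ring R] [LinearOrder R] [IsStrictOrderedRing R]
    {x y₁ y₂ z : α} (hy₁ : y₁ ⋖ x) (hy₂ : y₂ ⋖ x) (hne : y₁ ≠ y₂) (hz₁ : z ≤ y₁)
    (hz₂ : z ≤ y₂) : ∃ w ∈ Ico z x, 0 < mu R w x := by
  by_contra! hnonpos
  have htwo_le_one : (1 : R) + 1 ≤ 1 :=
    calc (1 : R) + 1 = -mu R y₁ x + -mu R y₂ x := by
          rw [mu_eq_neg_one_of_covBy hy₁, mu_eq_neg_one_of_covBy hy₂, neg_neg]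
      _ ≤ ∑ w ∈ Ico z x, -mu R w x :=
          add_le_sum (fun w hw ↦ neg_nonneg.2 (hnonpos w hw))
            (mem_Ico.2 ⟨hz₁, hy₁.lt⟩) (mem_Ico.2 ⟨hz₂, hy₂.lt⟩) hne
      _ = 1 := by
          rw [sum_neg_distrib, sum_Ico_mu_left_of_lt (hz₁.trans_lt hy₁.lt), neg_neg]
  exact (lt_add_one (1 : R)).not_ge htwo_le_one

end Mu

theorem stmt_14_general {P R : Type*} [PartialOrder P] [IsCodirectedOrder P]
    [LocallyFiniteOrder P] [DecidableEq P] [Ring R] [LinearOrder R] [IsStrictOrderedRing R] :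
    (∀ x y₁ y₂ : P, y₁ ⋖ x → y₂ ⋖ x → y₁ = y₂) ↔ ∀ a b : P, 0 < mu R a b → a = b := by
  constructor
  · intro hcov a b hpos
    by_contra hab
    exact hpos.not_ge (mu_nonpos_of_covBy_subsingleton (hcov b) hab)
  · intro hmu x y₁ y₂ hy₁ hy₂
    by_contra hne
    obtain ⟨z, hz₁, hz₂⟩ := exists_le_le y₁ y₂
    obtain ⟨w, hw, hpos⟩ := exists_mu_pos_of_covBy_of_covBy (R := R) hy₁ hy₂ hne hz₁ hz₂
    exact (mem_Ico.1 hw).2.ne (hmu w x hpos)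

/-- In a finite meet semilattice `L`, every element covers at most one element if and
only if `μ_L (z i, z j) > 0` implies `z i = z j`. -/
theorem stmt_14 {L : Type*} [SemilatticeInf L] [Fintype L] [DecidableEq L]
    [LocallyFiniteOrder L] :
    (∀ x y₁ y₂ : L, y₁ ⋖ x → y₂ ⋖ x → y₁ = y₂) ↔
      ∀ zi zj : L, 0 < mu ℤ zi zj → zi = zj :=
  stmt_14_general
end
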